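/- Let V, W ⊆ S^5 be equivalent polybox codes, and suppose there exists a simple polybox code V' ⊆ S^5 disjoint from V such that V ∪ V' is a cube tiling code. Then V and W are strongly equivalent. -/

import Mathlib

/- Common framework: polybox codes over a finite alphabet `S` with a
complementation `c : S → S` (an involution without fixed points). -/

namespace PolyboxPaper

variable {S : Type} [Fintype S] [DecidableEq S] {d : ℕ}

/-- Two words are dichotomous: they differ by complementation at some position. -/
def Dich (c : S → S) (v w : Fin d → S) : Prop := ∃ i, v i = c (w i)

instance (c : S → S) (v w : Fin d → S) : Decidable (Dich c v w) :=
  decidable_of_iff (∃ i, v i = c (w i)) Iff.rfl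

/-- A polybox code: every two distinct words are dichotomous. -/
def IsCode (c : S → S) (V : Finset (Fin d → S)) : Prop :=
  ∀ v ∈ V, ∀ w ∈ V, v ≠ w → Dich c v w

/-- A cube tiling code: a polybox code with `2 ^ d` words. -/
def CubeTiling (c : S → S) (V : Finset (Fin d → S)) : Prop :=
  IsCode c V ∧ V.card = 2 ^ d

/-- `v` and `w` form a twin pair in the `i`-th direction. -/
def TwinPair (c : S → S) (v w : Fin d → S) (i : Fin d) : Prop :=
  v i = c (w i) ∧ ∀ j, j ≠ i → v j = w j

/-- A code is twin pair free if no two of its words form a twin pair. -/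
def TwinPairFree (c : S → S) (V : Finset (Fin d → S)) : Prop :=
  ∀ v ∈ V, ∀ w ∈ V, ∀ i, ¬ TwinPair c v w i

/-- A single glue-and-cut operation: a twin pair `v, w` of `V` in the `i`-th
direction is replaced by a twin pair `q, t` in the `i`-th direction agreeing
with `v` (and `w`) at all positions `j ≠ i`. -/
def GCStep (c : S → S) (V W : Finset (Fin d → S)) : Prop :=
  ∃ (v w q t : Fin d → S) (i : Fin d), v ∈ V ∧ w ∈ V ∧ TwinPair c v w i ∧
    TwinPair c q t i ∧ (∀ j, j ≠ i → q j = v j) ∧ W = (V \ {v, w}) ∪ {q, t}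

/-- `W` is obtained from `V` by gluing and cutting (finite, possibly empty,
sequence of single glue-and-cut operations); equivalently, `V` and `W` are
strongly equivalent. -/
def GC (c : S → S) (V W : Finset (Fin d → S)) : Prop :=
  Relation.ReflTransGen (GCStep c) V W

/-- Passing from `V` to `W` by gluing and cutting keeping `Q` fixed:
every intermediate code contains `Q`. -/
def GCFix (c : S → S) (Q V W : Finset (Fin d → S)) : Prop :=
  Relation.ReflTransGen (fun A B => GCStep c A B ∧ Q ⊆ B) V W

/-- A realization: for each coordinate a map `f i : S → Set (X i)` taking
nonempty proper values and sending complementary letters to complementary sets. -/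
def IsRealization (c : S → S) (X : Fin d → Type) (f : ∀ i, S → Set (X i)) : Prop :=
  ∀ i s, (f i s).Nonempty ∧ f i s ≠ Set.univ ∧ f i (c s) = (f i s)ᶜ

/-- The box associated to a word by a realization. -/
def box {X : Fin d → Type} (f : ∀ i, S → Set (X i)) (v : Fin d → S) :
    Set (∀ i, X i) :=
  {x | ∀ i, x i ∈ f i (v i)}

/-- The word `w` is covered by the code `V` (`w ⊑ V`). -/
def CoveredWord (c : S → S) (w : Fin d → S) (V : Finset (Fin d → S)) : Prop :=
  ∀ (X : Fin d → Type) (f : ∀ i, S → Set (X i)), IsRealization c X f →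
    box f w ⊆ ⋃ v ∈ V, box f v

/-- `V ⊑ W`: every word of `V` is covered by `W`. -/
def Covered (c : S → S) (V W : Finset (Fin d → S)) : Prop :=
  ∀ v ∈ V, CoveredWord c v W

/-- Equivalent codes: `V ⊑ W` and `W ⊑ V`. -/
def Equivalent (c : S → S) (V W : Finset (Fin d → S)) : Prop :=
  Covered c V W ∧ Covered c W V

/-- `V ⊑̇ W`: `V ⊑ W` and no word of `V` belongs to any code obtained from `W`
by gluing and cutting. -/
def DotCovered (c : S → S) (V W : Finset (Fin d → S)) : Prop :=
  Covered c V W ∧ ∀ v ∈ V, ∀ W', GC c W W' → v ∉ W'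

/-- The density `δ(V, W)`. -/
noncomputable def delta (c : S → S) (V W : Finset (Fin d → S)) : ℕ∞ :=
  W.inf fun w => ((V.filter fun v => ¬ Dich c v w).card : ℕ∞)

/-- `C` is a minimal cover of the word `w`. -/
def MinCoverWord (c : S → S) (C : Finset (Fin d → S)) (w : Fin d → S) : Prop :=
  IsCode c C ∧ CoveredWord c w C ∧ ∀ q ∈ C, ¬ Dich c q w

/-- `C` is a minimal cover of the code `P`. -/
def MinCoverCode (c : S → S) (C P : Finset (Fin d → S)) : Prop :=
  IsCode c C ∧ Covered c P C ∧ ∀ q ∈ C, ∃ p ∈ P, ¬ Dich c q p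

/-- A simple polybox code. -/
def SimpleCode (c : S → S) (V : Finset (Fin d → S)) : Prop :=
  ∀ i : Fin d, ∃ s : S, ∀ v ∈ V, v i = s ∨ v i = c s

/-- A simple cube tiling code `{s₁, s₁'} × ⋯ × {s_d, s_d'}`. -/
def SimpleCubeTiling (c : S → S) (U : Finset (Fin d → S)) : Prop :=
  ∃ s : Fin d → S, ∀ v : Fin d → S, v ∈ U ↔ ∀ i, v i = s i ∨ v i = c (s i)

/-- Word whose first four coordinates are `x0 x1 x2 x3` and which agrees with
`r` elsewhere. -/
def specialWord (r : Fin d → S) (x0 x1 x2 x3 : S) : Fin d → S := fun i =>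
  if (i : ℕ) = 0 then x0 else if (i : ℕ) = 1 then x1 else if (i : ℕ) = 2 then x2
  else if (i : ℕ) = 3 then x3 else r i

/-- The special pair of 12-word codes (Theorem 1 of the paper). -/
def SpecialPair (c : S → S) (V W : Finset (Fin d → S)) : Prop :=
  ∃ (a b : S) (r : Fin d → S), a ≠ b ∧ a ≠ c b ∧
    V = {specialWord r a (c a) b (c b), specialWord r a b (c b) a,
         specialWord r a (c b) (c b) (c b), specialWord r (c a) a (c b) (c b),
         specialWord r (c a) (c a) a (c b), specialWord r (c a) b (c b) b,
         specialWord r b a b (c b), specialWord r b b b b,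
         specialWord r b (c b) (c a) b, specialWord r (c b) a b (c a),
         specialWord r (c b) (c a) b b, specialWord r (c b) (c b) (c b) b} ∧
    W = {specialWord r (c a) (c a) (c a) b, specialWord r (c a) b a (c a),
         specialWord r b a (c a) a, specialWord r a (c a) (c a) a,
         specialWord r (c a) a (c a) (c a), specialWord r a b b (c a),
         specialWord r b b a a, specialWord r a (c b) (c a) (c a),
         specialWord r (c b) a (c b) a, specialWord r (c b) (c a) a a,
         specialWord r (c b) (c b) a (c a), specialWord r b (c b) a (c b)}

/-- An isomorphism of `S^d`: a permutation of coordinates followed by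
position bijections commuting with complementation. -/
def IsIso (c : S → S) (Φ : (Fin d → S) → Fin d → S) : Prop :=
  ∃ (σ : Equiv.Perm (Fin d)) (h : Fin d → S → S),
    (∀ i, Function.Bijective (h i)) ∧ (∀ i s, h i (c s) = c (h i s)) ∧
    ∀ v i, Φ v i = h i (v (σ i))

/-- The pair `(V, W)` is, up to isomorphism, the special pair. -/
def SpecialPairUpToIso (c : S → S) (V W : Finset (Fin d → S)) : Prop :=
  ∃ Φ, IsIso c Φ ∧
    (SpecialPair c (V.image Φ) (W.image Φ) ∨ SpecialPair c (W.image Φ) (V.image Φ))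

end PolyboxPaper

namespace PolyboxPaper
set_option linter.unusedSectionVars false
variable {S : Type} [Fintype S] [DecidableEq S] {d : ℕ}

/-- The complementation is a fixed point free involution. -/
structure Compl (c : S → S) : Prop where
  inv : ∀ s, c (c s) = s
  ne : ∀ s, c s ≠ s

/-- One-dimensional points: selections of one letter from each complementary pair. -/
abbrev Pt (c : S → S) := {σ : S → Bool // ∀ s, σ (c s) = !σ s}

/-- The point `x` lies in the universal box of the word `w`. -/
def Mem {c : S → S} (x : Fin d → Pt c) (w : Fin d → S) : Prop := ∀ i, (x i).1 (w i) = true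

instance {c : S → S} (x : Fin d → Pt c) (w : Fin d → S) : Decidable (Mem x w) :=
  decidable_of_iff (∀ i, (x i).1 (w i) = true) Iff.rfl

/-- The point `x` is covered by the set of words `V`. -/
def Cov {c : S → S} (x : Fin d → Pt c) (V : Finset (Fin d → S)) : Prop := ∃ v ∈ V, Mem x v

instance {c : S → S} (x : Fin d → Pt c) (V : Finset (Fin d → S)) : Decidable (Cov x V) :=
  decidable_of_iff (∃ v ∈ V, Mem x v) Iff.rfl

/-- Equivalence seen through the universal realization. -/
def Eqv (c : S → S) (V W : Finset (Fin d → S)) : Prop := ∀ x : Fin d → Pt c, Cov x V ↔ Cov x W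

variable {c : S → S}

lemma Eqv.symm {V W : Finset (Fin d → S)} (h : Eqv c V W) : Eqv c W V := fun x => (h x).symm

lemma Eqv.trans {V W U : Finset (Fin d → S)} (h : Eqv c V W) (h' : Eqv c W U) : Eqv c V U :=
  fun x => (h x).trans (h' x)

lemma Eqv.refl (V : Finset (Fin d → S)) : Eqv c V V := fun _ => Iff.rfl

lemma Compl.inj (H : Compl c) {s t : S} (h : c s = c t) : s = t := by
  rw [← H.inv s, h, H.inv]

lemma Dich.symm (H : Compl c) {v w : Fin d → S} (h : Dich c v w) : Dich c w v := by
  obtain ⟨i, hi⟩ := h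
  exact ⟨i, by rw [hi, H.inv]⟩

lemma not_dich_self (H : Compl c) (v : Fin d → S) : ¬ Dich c v v := by
  rintro ⟨i, hi⟩
  exact H.ne _ hi.symm

/-- Flip the selection on one complementary pair. -/
def flip (H : Compl c) (σ : Pt c) (s : S) : Pt c :=
  ⟨fun u => if u = s ∨ u = c s then !σ.1 u else σ.1 u, by
    intro u
    have h1 : (c u = s ∨ c u = c s) ↔ (u = s ∨ u = c s) := by
      constructor
      · rintro (h | h)
        · right; rw [← h, H.inv]
        · left; exact H.inj h
      · rintro (h | h)
        · right; rw [h]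
        · left; rw [h, H.inv]
    simp only [h1]
    split_ifs <;> simp [σ.2 u]⟩

lemma flip_self (H : Compl c) (σ : Pt c) (s : S) : (flip H σ s).1 s = !σ.1 s := by
  simp [flip]

lemma flip_other (H : Compl c) (σ : Pt c) {s u : S} (h : u ≠ s) (h' : u ≠ c s) :
    (flip H σ s).1 u = σ.1 u := by
  simp [flip, h, h']

lemma flip_flip (H : Compl c) (σ : Pt c) (s : S) : flip H (flip H σ s) s = σ := by
  apply Subtype.ext
  funext u
  simp only [flip]
  split_ifs <;> simp

/-- Force a letter to be selected. -/
def setT (H : Compl c) (σ : Pt c) (s : S) : Pt c := if σ.1 s = true then σ else flip H σ s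

lemma setT_self (H : Compl c) (σ : Pt c) (s : S) : (setT H σ s).1 s = true := by
  unfold setT
  split_ifs with h
  · exact h
  · rw [flip_self]; simpa using h

lemma setT_other (H : Compl c) (σ : Pt c) {s u : S} (h : u ≠ s) (h' : u ≠ c s) :
    (setT H σ s).1 u = σ.1 u := by
  unfold setT
  split_ifs
  · rfl
  · exact flip_other H σ h h'

lemma pt_nonempty (H : Compl c) : Nonempty (Pt c) := by
  let e := Fintype.equivFin S
  refine ⟨⟨fun s => decide (e s < e (c s)), ?_⟩⟩
  intro s
  have h1 : e s ≠ e (c s) := fun h => H.ne s (e.injective h).symm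
  show decide (e (c s) < e (c (c s))) = !decide (e s < e (c s))
  rw [H.inv]
  rcases lt_or_gt_of_ne h1 with h | h
  · simp [h, h.le]
  · simp [h, h.le]

lemma exists_pt (H : Compl c) {s t : S} (h : t ≠ c s) :
    ∃ σ : Pt c, σ.1 s = true ∧ σ.1 t = true := by
  obtain ⟨σ⟩ := pt_nonempty H
  refine ⟨setT H (setT H σ s) t, ?_, setT_self _ _ _⟩
  by_cases h1 : s = t
  · rw [h1]; exact setT_self _ _ _
  · rw [setT_other _ _ h1, setT_self]
    intro h2
    exact h (by rw [h2, H.inv])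

lemma exists_mem_both (H : Compl c) {v w : Fin d → S} (h : ¬ Dich c v w) :
    ∃ x : Fin d → Pt c, Mem x v ∧ Mem x w := by
  have : ∀ i, ∃ σ : Pt c, σ.1 (v i) = true ∧ σ.1 (w i) = true := by
    intro i
    apply exists_pt H
    intro h'
    exact h ⟨i, by rw [h', H.inv]⟩
  choose x hx using this
  exact ⟨x, fun i => (hx i).1, fun i => (hx i).2⟩

lemma exists_mem (H : Compl c) (v : Fin d → S) : ∃ x : Fin d → Pt c, Mem x v := by
  obtain ⟨x, hx, -⟩ := exists_mem_both H (not_dich_self H v)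
  exact ⟨x, hx⟩

lemma not_mem_both {v w : Fin d → S} (h : Dich c v w) {x : Fin d → Pt c}
    (hv : Mem x v) (hw : Mem x w) : False := by
  obtain ⟨i, hi⟩ := h
  have h1 := hv i
  rw [hi, (x i).2, hw i] at h1
  simp at h1

lemma dich_of_disj (H : Compl c) {v w : Fin d → S}
    (h : ∀ x : Fin d → Pt c, Mem x v → Mem x w → False) : Dich c v w := by
  by_contra h'
  obtain ⟨x, h1, h2⟩ := exists_mem_both H h'
  exact h x h1 h2

lemma IsCode.eq_of_mem {V : Finset (Fin d → S)} (hV : IsCode c V) {v w : Fin d → S}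
    (hv : v ∈ V) (hw : w ∈ V) {x : Fin d → Pt c} (h1 : Mem x v) (h2 : Mem x w) : v = w := by
  by_contra h
  exact not_mem_both (hV v hv w hw h) h1 h2

lemma IsCode.mono {V W : Finset (Fin d → S)} (hV : IsCode c V) (h : W ⊆ V) : IsCode c W :=
  fun v hv w hw => hV v (h hv) w (h hw)

/-- From the paper's equivalence to the universal one. -/
lemma eqv_of_equivalent (H : Compl c) {V W : Finset (Fin d → S)} (h : Equivalent c V W) :
    Eqv c V W := by
  have key : ∀ {A B : Finset (Fin d → S)}, Covered c A B → ∀ x : Fin d → Pt c, Cov x A → Cov x B := by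
    rintro A B hAB x ⟨v, hv, hx⟩
    have := hAB v hv (fun _ => Pt c) (fun _ s => {σ | σ.1 s = true}) (by
      intro i s
      refine ⟨?_, ?_, ?_⟩
      · obtain ⟨σ, h1, -⟩ := exists_pt H (s := s) (t := s) (H.ne s).symm
        exact ⟨σ, h1⟩
      · obtain ⟨σ, h1, -⟩ := exists_pt H (s := c s) (t := c s) (H.ne (c s)).symm
        intro h2
        have h3 : σ ∈ {σ : Pt c | σ.1 s = true} := by
          have h2' : {σ : Pt c | σ.1 s = true} = Set.univ := h2
          rw [h2']; exact Set.mem_univ _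
        change σ.1 s = true at h3
        rw [σ.2, h3] at h1
        simp at h1
      · ext σ
        simp [σ.2])
    have h2 := this (show x ∈ box _ v from hx)
    simp only [Set.mem_iUnion] at h2
    obtain ⟨w, hw, hxw⟩ := h2
    exact ⟨w, hw, hxw⟩
  exact fun x => ⟨key h.1 x, key h.2 x⟩

/-! ### moving one coordinate of a point -/

/-- Flip the `i`-th coordinate of a point at the letter `s`. -/
def flipAt (H : Compl c) (x : Fin d → Pt c) (i : Fin d) (s : S) : Fin d → Pt c :=
  Function.update x i (flip H (x i) s)

lemma flipAt_flipAt (H : Compl c) (x : Fin d → Pt c) (i : Fin d) (s : S) :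
    flipAt H (flipAt H x i s) i s = x := by
  simp [flipAt, flip_flip]

lemma mem_flipAt_other (H : Compl c) {x : Fin d → Pt c} {i : Fin d} {s : S} {w : Fin d → S}
    (h : w i ≠ s) (h' : w i ≠ c s) : Mem (flipAt H x i s) w ↔ Mem x w := by
  unfold Mem
  refine forall_congr' fun j => ?_
  by_cases hj : j = i
  · subst hj
    simp [flipAt, flip_other H _ h h']
  · simp [flipAt, hj]

lemma mem_flipAt_upd (H : Compl c) {x : Fin d → Pt c} {i : Fin d} {s : S} {w : Fin d → S}
    (h : w i = c s) : Mem (flipAt H x i s) w ↔ Mem x (Function.update w i s) := by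
  unfold Mem
  refine forall_congr' fun j => ?_
  by_cases hj : j = i
  · subst hj
    have := (flip H (x j) s).2 s
    simp [flipAt, h, this, flip_self]
  · simp [flipAt, hj]

/-- The central exchange lemma: if `Q` has no letter `c s` at position `i`, the `s`-part of `P` is
equivalent to the `s`-part of `Q` together with the shifted `c s`-part of `P`. -/
lemma exchange (H : Compl c) {P Q : Finset (Fin d → S)} (hP : IsCode c P) (hQ : IsCode c Q)
    (h : Eqv c P Q) (i : Fin d) (s : S) (hs : ∀ q ∈ Q, q i ≠ c s) :
    Eqv c (P.filter fun w => w i = s)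
      ((Q.filter fun w => w i = s) ∪ (P.filter fun w => w i = c s).image fun w =>
        Function.update w i s) ∧
    IsCode c ((Q.filter fun w => w i = s) ∪ (P.filter fun w => w i = c s).image fun w =>
        Function.update w i s) := by
  have hsc : s ≠ c s := (H.ne s).symm
  have true_of : ∀ {x : Fin d → Pt c} {w : Fin d → S}, Mem x w → w i = s → (x i).1 s = true := by
    intro x w hx hw; rw [← hw]; exact hx i
  have csne : ∀ {x : Fin d → Pt c} {w : Fin d → S}, Mem x w → (x i).1 s = true → w i ≠ c s := by
    intro x w hx hw h'
    have := hx i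
    rw [h', (x i).2, hw] at this
    simp at this
  have fl : ∀ {x : Fin d → Pt c}, (x i).1 s = true → ((flipAt H x i s) i).1 s = false := by
    intro x hx; simp [flipAt, flip_self, hx]
  have disj : ∀ q ∈ Q, q i = s → ∀ p ∈ P, p i = c s → ∀ x : Fin d → Pt c, Mem x q →
      Mem x (Function.update p i s) → False := by
    intro q hq hqs p hp hps x hxq hxp
    rw [← mem_flipAt_upd H hps] at hxp
    obtain ⟨q2, hq2, hx2⟩ := (h _).1 ⟨p, hp, hxp⟩
    have h1 : q2 i ≠ s := by
      intro h1
      have := hx2 i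
      rw [h1, fl (true_of hxq hqs)] at this
      simp at this
    have h2 := (mem_flipAt_other H h1 (hs q2 hq2)).1 hx2
    have := hQ.eq_of_mem hq hq2 hxq h2
    exact h1 (this ▸ hqs)
  refine ⟨?_, ?_⟩
  · intro x
    constructor
    · rintro ⟨p, hp, hxp⟩
      rw [Finset.mem_filter] at hp
      obtain ⟨hp, hps⟩ := hp
      have hxt := true_of hxp hps
      obtain ⟨q, hq, hxq⟩ := (h x).1 ⟨p, hp, hxp⟩
      by_cases hqs : q i = s
      · exact ⟨q, by simp [hq, hqs], hxq⟩
      · have h1 := (mem_flipAt_other H hqs (hs q hq)).2 hxq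
        obtain ⟨p2, hp2, hx2⟩ := (h _).2 ⟨q, hq, h1⟩
        have h2 : p2 i ≠ s := by
          intro h2
          have := hx2 i
          rw [h2, fl hxt] at this
          simp at this
        by_cases h3 : p2 i = c s
        · refine ⟨Function.update p2 i s, ?_, (mem_flipAt_upd H h3).1 hx2⟩
          rw [Finset.mem_union, Finset.mem_image]
          exact Or.inr ⟨p2, by simp [hp2, h3], rfl⟩
        · have h4 := (mem_flipAt_other H h2 h3).1 hx2
          have := hP.eq_of_mem hp hp2 hxp h4
          exact absurd (this ▸ hps) h2
    · rintro ⟨w, hw, hxw⟩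
      rw [Finset.mem_union, Finset.mem_image] at hw
      rcases hw with hw | ⟨p, hp, rfl⟩
      · rw [Finset.mem_filter] at hw
        obtain ⟨hw, hws⟩ := hw
        have hxt := true_of hxw hws
        obtain ⟨p, hp, hxp⟩ := (h x).2 ⟨w, hw, hxw⟩
        by_cases hps : p i = s
        · exact ⟨p, by simp [hp, hps], hxp⟩
        · exfalso
          have h1 := (mem_flipAt_other H hps (csne hxp hxt)).2 hxp
          obtain ⟨q2, hq2, hx2⟩ := (h _).1 ⟨p, hp, h1⟩
          have h2 : q2 i ≠ s := by
            intro h2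
            have := hx2 i
            rw [h2, fl hxt] at this
            simp at this
          have h4 := (mem_flipAt_other H h2 (hs q2 hq2)).1 hx2
          have := hQ.eq_of_mem hw hq2 hxw h4
          exact absurd (this ▸ hws) h2
      · rw [Finset.mem_filter] at hp
        obtain ⟨hp, hps⟩ := hp
        have hxt : (x i).1 s = true := true_of hxw (by simp)
        have hxp := (mem_flipAt_upd H hps).2 hxw
        obtain ⟨q, hq, hxq⟩ := (h _).1 ⟨p, hp, hxp⟩
        have h2 : q i ≠ s := by
          intro h2
          have := hxq i
          rw [h2, fl hxt] at this
          simp at this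
        have h4 := (mem_flipAt_other H h2 (hs q hq)).1 hxq
        obtain ⟨p2, hp2, hx2⟩ := (h _).2 ⟨q, hq, h4⟩
        by_cases hps2 : p2 i = s
        · exact ⟨p2, by simp [hp2, hps2], hx2⟩
        · exfalso
          have h5 := (mem_flipAt_other H hps2 (csne hx2 hxt)).2 hx2
          have := hP.eq_of_mem hp hp2 hxp h5
          exact csne hx2 hxt (this ▸ hps)
  · intro v hv w hw hvw
    rw [Finset.mem_union, Finset.mem_image] at hv hw
    rcases hv with hv | ⟨p, hp, rfl⟩ <;> rcases hw with hw | ⟨p', hp', rfl⟩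
    · rw [Finset.mem_filter] at hv hw
      exact hQ v hv.1 w hw.1 hvw
    · rw [Finset.mem_filter] at hv hp'
      exact dich_of_disj H (disj v hv.1 hv.2 p' hp'.1 hp'.2)
    · rw [Finset.mem_filter] at hw hp
      exact (dich_of_disj H (disj w hw.1 hw.2 p hp.1 hp.2)).symm H
    · rw [Finset.mem_filter] at hp hp'
      have hne : p ≠ p' := by rintro rfl; exact hvw rfl
      obtain ⟨j, hj⟩ := hP p hp.1 p' hp'.1 hne
      have hji : j ≠ i := by
        rintro rfl
        rw [hp.2, hp'.2] at hj
        exact H.ne _ hj.symm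
      exact ⟨j, by simpa [hji] using hj⟩

/-- constant coordinates are inherited by equivalent codes -/
lemma const_of_eqv (H : Compl c) {P Q : Finset (Fin d → S)} (h : Eqv c P Q) {i : Fin d} {s : S}
    (hQ : ∀ q ∈ Q, q i = s) : ∀ p ∈ P, p i = s := by
  intro p hp
  by_contra hps
  obtain ⟨x, hx⟩ := exists_mem H p
  obtain ⟨σ, h1, h2⟩ := exists_pt H (s := p i) (t := c s) (fun h' => hps (H.inj h').symm)
  have hm : Mem (Function.update x i σ) p := by
    intro j
    by_cases hj : j = i
    · subst hj; simpa using h1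
    · simpa [hj] using hx j
  obtain ⟨q, hq, hxq⟩ := (h _).1 ⟨p, hp, hm⟩
  have := hxq i
  rw [hQ q hq] at this
  rw [σ.2] at h2
  simp only [Function.update_self] at this
  rw [this] at h2
  simp at h2

lemma eqv_erase {P Q : Finset (Fin d → S)} (hP : IsCode c P) (hQ : IsCode c Q)
    (h : Eqv c P Q) {R : Finset (Fin d → S)} (hRP : R ⊆ P) (hRQ : R ⊆ Q) :
    Eqv c (P \ R) (Q \ R) := by
  have key : ∀ {A B : Finset (Fin d → S)}, IsCode c A → (∀ x, Cov (c := c) x A → Cov x B) → R ⊆ A →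
      ∀ x, Cov (c := c) x (A \ R) → Cov x (B \ R) := by
    rintro A B hA hAB hRA x ⟨v, hv, hx⟩
    rw [Finset.mem_sdiff] at hv
    obtain ⟨w, hw, hxw⟩ := hAB x ⟨v, hv.1, hx⟩
    refine ⟨w, ?_, hxw⟩
    rw [Finset.mem_sdiff]
    refine ⟨hw, fun hwR => ?_⟩
    have := hA.eq_of_mem hv.1 (hRA hwR) hx hxw
    exact hv.2 (this ▸ hwR)
  exact fun x => ⟨key hP (fun x => (h x).1) hRP x, key hQ (fun x => (h x).2) hRQ x⟩

end PolyboxPaper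

namespace PolyboxPaper
set_option linter.unusedSectionVars false
variable {S : Type} [Fintype S] [DecidableEq S] {d : ℕ} {c : S → S}

/-! ### volumes -/

lemma card_half (H : Compl c) (s : S) :
    2 * (Finset.univ.filter fun σ : Pt c => σ.1 s = true).card = Fintype.card (Pt c) := by
  have h1 : (Finset.univ.filter fun σ : Pt c => σ.1 s = true).card
      = (Finset.univ.filter fun σ : Pt c => ¬ σ.1 s = true).card := by
    apply Finset.card_bij (fun σ _ => flip H σ s)
    · intro σ hσ
      simp only [Finset.mem_filter, Finset.mem_univ, true_and] at hσ ⊢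
      rw [flip_self, hσ]; simp
    · intro σ _ τ _ h
      rw [← flip_flip H σ s, h, flip_flip]
    · intro σ hσ
      refine ⟨flip H σ s, ?_, flip_flip H σ s⟩
      simp only [Finset.mem_filter, Finset.mem_univ, true_and] at hσ ⊢
      rw [flip_self]; simpa using hσ
  have h2 := Finset.card_filter_add_card_filter_not (s := (Finset.univ : Finset (Pt c)))
    (fun σ => σ.1 s = true)
  rw [Finset.card_univ] at h2
  omega

lemma card_quarter (H : Compl c) {s t : S} (h : s ≠ t) (h' : s ≠ c t) :
    2 * (Finset.univ.filter fun σ : Pt c => σ.1 t = true ∧ σ.1 s = true).card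
      = (Finset.univ.filter fun σ : Pt c => σ.1 s = true).card := by
  have h1 : (Finset.univ.filter fun σ : Pt c => σ.1 t = true ∧ σ.1 s = true).card
      = (Finset.univ.filter fun σ : Pt c => (¬ σ.1 t = true) ∧ σ.1 s = true).card := by
    apply Finset.card_bij (fun σ _ => flip H σ t)
    · intro σ hσ
      simp only [Finset.mem_filter, Finset.mem_univ, true_and] at hσ ⊢
      rw [flip_self, flip_other H _ h h', hσ.1]; simp [hσ.2]
    · intro σ _ τ _ h
      rw [← flip_flip H σ t, h, flip_flip]
    · intro σ hσ
      refine ⟨flip H σ t, ?_, flip_flip H σ t⟩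
      simp only [Finset.mem_filter, Finset.mem_univ, true_and] at hσ ⊢
      rw [flip_self, flip_other H _ h h']; simpa using hσ
  have h2 := Finset.card_filter_add_card_filter_not
    (s := (Finset.univ.filter fun σ : Pt c => σ.1 s = true)) (fun σ => σ.1 t = true)
  rw [Finset.filter_filter, Finset.filter_filter] at h2
  have e1 : (Finset.univ.filter fun σ : Pt c => σ.1 s = true ∧ σ.1 t = true)
      = (Finset.univ.filter fun σ : Pt c => σ.1 t = true ∧ σ.1 s = true) :=
    Finset.filter_congr fun _ _ => and_comm
  have e2 : (Finset.univ.filter fun σ : Pt c => σ.1 s = true ∧ ¬ σ.1 t = true)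
      = (Finset.univ.filter fun σ : Pt c => (¬ σ.1 t = true) ∧ σ.1 s = true) :=
    Finset.filter_congr fun _ _ => and_comm
  rw [e1, e2] at h2
  omega

/-- the points whose coordinates in `E` lie in the box of `p` -/
def tb (c : S → S) (E : Finset (Fin d)) (p : Fin d → S) : Finset (Fin d → Pt c) :=
  Finset.univ.filter fun x => ∀ i ∈ E, (x i).1 (p i) = true

lemma card_tb (H : Compl c) (E : Finset (Fin d)) (p : Fin d → S) :
    2 ^ E.card * (tb c E p).card = Fintype.card (Fin d → Pt c) := by
  have h1 : tb c E p = Fintype.piFinset fun i =>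
      if i ∈ E then (Finset.univ.filter fun σ : Pt c => σ.1 (p i) = true) else Finset.univ := by
    ext x
    simp only [tb, Finset.mem_filter, Finset.mem_univ, true_and, Fintype.mem_piFinset]
    refine forall_congr' fun i => ?_
    split_ifs with h <;> simp [h]
  have h2 : (2 : ℕ) ^ E.card = ∏ i : Fin d, if i ∈ E then 2 else 1 := by
    rw [Finset.prod_ite]; simp
  rw [h1, Fintype.card_piFinset, h2, ← Finset.prod_mul_distrib, Fintype.card_pi]
  refine Finset.prod_congr rfl fun i _ => ?_
  split_ifs
  · exact card_half H _
  · simp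

/-- packing bound, and the equality case -/
lemma pack (H : Compl c) (E : Finset (Fin d)) (P : Finset (Fin d → S))
    (hP : ∀ p ∈ P, ∀ q ∈ P, p ≠ q → ∃ i ∈ E, p i = c (q i)) :
    P.card ≤ 2 ^ E.card ∧ (P.card = 2 ^ E.card → ∀ x : Fin d → Pt c, ∃ p ∈ P, ∀ i ∈ E,
      (x i).1 (p i) = true) := by
  have hdis : ∀ p ∈ P, ∀ q ∈ P, p ≠ q → Disjoint (tb c E p) (tb c E q) := by
    intro p hp q hq hpq
    obtain ⟨i, hi, hpi⟩ := hP p hp q hq hpq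
    rw [Finset.disjoint_left]
    intro x hx hx'
    simp only [tb, Finset.mem_filter, Finset.mem_univ, true_and] at hx hx'
    have h1 := hx i hi
    rw [hpi, (x i).2, hx' i hi] at h1
    simp at h1
  have hcard := Finset.card_biUnion (s := P) (t := tb c E) hdis
  have h1 : 2 ^ E.card * (P.biUnion (tb c E)).card = P.card * Fintype.card (Fin d → Pt c) := by
    rw [hcard, Finset.mul_sum, Finset.sum_congr rfl fun p _ => card_tb H E p]
    simp
  have hpos : 0 < Fintype.card (Fin d → Pt c) := by
    have := pt_nonempty H
    exact Fintype.card_pos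
  have h2 : (P.biUnion (tb c E)).card ≤ Fintype.card (Fin d → Pt c) := Finset.card_le_univ _
  refine ⟨?_, ?_⟩
  · by_contra h3
    push Not at h3
    have := Nat.mul_le_mul_left (2 ^ E.card) h2
    rw [h1] at this
    exact absurd (Nat.le_of_mul_le_mul_right this hpos) (by omega)
  · intro h3 x
    rw [h3] at h1
    have h4 : (P.biUnion (tb c E)).card = Fintype.card (Fin d → Pt c) :=
      Nat.eq_of_mul_eq_mul_left (by positivity) h1
    have h5 := (Finset.card_eq_iff_eq_univ _).1 h4
    have h6 : x ∈ P.biUnion (tb c E) := by rw [h5]; exact Finset.mem_univ _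
    simpa [tb] using h6

lemma card_box_pos (H : Compl c) (p : Fin d → S) :
    0 < (Finset.univ.filter fun x : Fin d → Pt c => Mem x p).card := by
  obtain ⟨x, hx⟩ := exists_mem H p
  exact Finset.card_pos.2 ⟨x, by simpa using hx⟩

/-- equivalent codes have equally many words -/
lemma card_eq_of_eqv (H : Compl c) {P Q : Finset (Fin d → S)} (hP : IsCode c P) (hQ : IsCode c Q)
    (h : Eqv c P Q) : P.card = Q.card := by
  have key : ∀ {P : Finset (Fin d → S)}, IsCode c P →
      2 ^ d * (Finset.univ.filter fun x : Fin d → Pt c => Cov x P).card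
        = P.card * Fintype.card (Fin d → Pt c) := by
    intro P hP
    have h1 : (Finset.univ.filter fun x : Fin d → Pt c => Cov x P)
        = P.biUnion (tb c Finset.univ) := by
      ext x
      rw [Finset.mem_filter, Finset.mem_biUnion]
      simp [tb, Cov, Mem]
    rw [h1, Finset.card_biUnion, Finset.mul_sum]
    · have h2 : ∀ p ∈ P, 2 ^ d * (tb c Finset.univ p).card = Fintype.card (Fin d → Pt c) := by
        intro p _
        have := card_tb H Finset.univ p
        rwa [Finset.card_univ, Fintype.card_fin] at this
      rw [Finset.sum_congr rfl h2, Finset.sum_const, smul_eq_mul]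
    · intro p hp q hq hpq
      refine Finset.disjoint_left.2 ?_
      intro x hx hx'
      have hx1 : Mem x p := by simpa [tb, Mem] using hx
      have hx2 : Mem x q := by simpa [tb, Mem] using hx'
      exact hpq (hP.eq_of_mem hp hq hx1 hx2)
  have h1 := key hP
  have h2 := key hQ
  simp only [h _] at h1
  rw [h1] at h2
  have hpos : 0 < Fintype.card (Fin d → Pt c) := by
    have := pt_nonempty H
    exact Fintype.card_pos
  exact Nat.eq_of_mul_eq_mul_right hpos h2

/-- the set of coordinates where `p` and `q` differ -/
def supp (q p : Fin d → S) : Finset (Fin d) := Finset.univ.filter fun i => p i ≠ q i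

lemma mem_supp {q p : Fin d → S} {i : Fin d} : i ∈ supp q p ↔ p i ≠ q i := by simp [supp]

lemma card_inter (H : Compl c) {p q : Fin d → S} (h : ¬ Dich c p q) :
    ((Finset.univ.filter fun x : Fin d → Pt c => Mem x p ∧ Mem x q).card : ℚ)
      = (Finset.univ.filter fun x : Fin d → Pt c => Mem x q).card * (1 / 2) ^ (supp q p).card := by
  have h1 : (Finset.univ.filter fun x : Fin d → Pt c => Mem x p ∧ Mem x q)
      = Fintype.piFinset fun i =>
        (Finset.univ.filter fun σ : Pt c => σ.1 (p i) = true ∧ σ.1 (q i) = true) := by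
    ext x
    simp only [Finset.mem_filter, Finset.mem_univ, true_and, Fintype.mem_piFinset]
    unfold Mem
    exact forall_and.symm
  have h2 : (Finset.univ.filter fun x : Fin d → Pt c => Mem x q)
      = Fintype.piFinset fun i =>
        (Finset.univ.filter fun σ : Pt c => σ.1 (q i) = true) := by
    ext x
    simp only [Finset.mem_filter, Finset.mem_univ, true_and, Fintype.mem_piFinset]
    rfl
  have h3 : ((1 : ℚ) / 2) ^ (supp q p).card = ∏ i : Fin d, if p i ≠ q i then 1 / 2 else 1 := by
    rw [Finset.prod_ite]; simp [supp]
  rw [h1, h2, Fintype.card_piFinset, Fintype.card_piFinset, h3]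
  push_cast
  rw [← Finset.prod_mul_distrib]
  refine Finset.prod_congr rfl fun i _ => ?_
  by_cases hpq : p i = q i
  · simp [hpq]
  · rw [if_pos hpq]
    have h4 := card_quarter H (s := q i) (t := p i) (Ne.symm hpq)
      (fun h' => h ⟨i, by rw [h', H.inv]⟩)
    have h5 := congrArg (Nat.cast (R := ℚ)) h4
    push_cast at h5
    linarith

/-- volume identity for covers of a word -/
lemma cover_volume (H : Compl c) {C : Finset (Fin d → S)} (hC : IsCode c C) {q : Fin d → S}
    (hn : ∀ p ∈ C, ¬ Dich c p q) (hcov : ∀ x : Fin d → Pt c, Mem x q → Cov x C) :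
    ∑ p ∈ C, ((1 : ℚ) / 2) ^ (supp q p).card = 1 := by
  have h1 : (Finset.univ.filter fun x : Fin d → Pt c => Mem x q)
      = C.biUnion fun p => (Finset.univ.filter fun x : Fin d → Pt c => Mem x p ∧ Mem x q) := by
    ext x
    simp only [Finset.mem_filter, Finset.mem_univ, true_and, Finset.mem_biUnion]
    constructor
    · intro hx
      obtain ⟨p, hp, hxp⟩ := hcov x hx
      exact ⟨p, hp, hxp, hx⟩
    · rintro ⟨p, -, -, hx⟩
      exact hx
  have h2 := congrArg Finset.card h1
  rw [Finset.card_biUnion] at h2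
  · have h3 := congrArg (Nat.cast (R := ℚ)) h2
    push_cast at h3
    rw [Finset.sum_congr rfl fun p hp => card_inter H (hn p hp), ← Finset.mul_sum] at h3
    have h4 : (0 : ℚ) < (Finset.univ.filter fun x : Fin d → Pt c => Mem x q).card := by
      exact_mod_cast card_box_pos H q
    have h5 := mul_left_cancel₀ h4.ne' ((mul_one _).trans h3)
    exact h5.symm
  · intro p hp p' hp' hne
    refine Finset.disjoint_left.2 ?_
    intro x hx hx'
    simp only [Finset.mem_filter, Finset.mem_univ, true_and] at hx hx'
    exact hne (hC.eq_of_mem hp hp' hx.1 hx'.1)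

end PolyboxPaper

namespace PolyboxPaper
set_option linter.unusedSectionVars false
variable {S : Type} [Fintype S] [DecidableEq S] {d : ℕ} {c : S → S}

/-! ### gluing and cutting -/

/-- the twin pair with stem `r` -/
def pairW (c : S → S) (r : Fin d → S) (i : Fin d) (s : S) : Finset (Fin d → S) :=
  {Function.update r i s, Function.update r i (c s)}

lemma mem_pairW {r : Fin d → S} {i : Fin d} {s : S} {z : Fin d → S} :
    z ∈ pairW c r i s ↔ z = Function.update r i s ∨ z = Function.update r i (c s) := by
  simp [pairW]

lemma gcstep_mk (H : Compl c) {V : Finset (Fin d → S)} {r : Fin d → S} {i : Fin d} {s : S} (t : S)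
    (h : pairW c r i s ⊆ V) : GCStep c V ((V \ pairW c r i s) ∪ pairW c r i t) := by
  refine ⟨Function.update r i s, Function.update r i (c s), Function.update r i t,
    Function.update r i (c t), i, h (by simp [pairW]), h (by simp [pairW]), ?_, ?_, ?_, rfl⟩
  · exact ⟨by simp [H.inv], fun j hj => by simp [hj]⟩
  · exact ⟨by simp [H.inv], fun j hj => by simp [hj]⟩
  · intro j hj; simp [hj]

lemma gcstep_cases (H : Compl c) {V W : Finset (Fin d → S)} (h : GCStep c V W) :
    ∃ r i s t, pairW c r i s ⊆ V ∧ W = (V \ pairW c r i s) ∪ pairW c r i t := by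
  obtain ⟨v, w, q, t, i, hv, hw, h1, h2, h3, h4⟩ := h
  have e1 : Function.update v i (v i) = v := Function.update_eq_self _ _
  have e2 : Function.update v i (c (v i)) = w := by
    funext j
    by_cases hj : j = i
    · subst hj; simp [h1.1, H.inv]
    · simp [hj, h1.2 j hj]
  have e3 : Function.update v i (q i) = q := by
    funext j
    by_cases hj : j = i
    · subst hj; simp
    · simp [hj, h3 j hj]
  have e4 : Function.update v i (c (q i)) = t := by
    funext j
    by_cases hj : j = i
    · subst hj; simp [h2.1, H.inv]
    · simp [hj, ← h3 j hj, h2.2 j hj]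
  refine ⟨v, i, v i, q i, ?_, ?_⟩
  · intro z hz
    rw [mem_pairW, e1, e2] at hz
    rcases hz with rfl | rfl <;> assumption
  · rw [h4, pairW, pairW, e1, e2, e3, e4]

lemma dich_pair (H : Compl c) {u r : Fin d → S} {i : Fin d} {s : S}
    (h1 : Dich c u (Function.update r i s)) (h2 : Dich c u (Function.update r i (c s))) :
    ∀ t, Dich c u (Function.update r i t) := by
  intro t
  obtain ⟨j, hj⟩ := h1
  by_cases hji : j = i
  · subst hji
    obtain ⟨k, hk⟩ := h2
    by_cases hki : k = j
    · subst hki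
      simp only [Function.update_self] at hj hk
      rw [hj] at hk
      exact absurd (H.inj hk).symm (H.ne s)
    · exact ⟨k, by simpa [hki] using hk⟩
  · exact ⟨j, by simpa [hji] using hj⟩

lemma dich_pair_all (H : Compl c) {V : Finset (Fin d → S)} (hV : IsCode c V) {r : Fin d → S}
    {i : Fin d} {s : S} (h : pairW c r i s ⊆ V) {u : Fin d → S} (hu : u ∈ V)
    (hu' : u ∉ pairW c r i s) (t : S) : Dich c u (Function.update r i t) := by
  rw [mem_pairW, not_or] at hu'
  exact dich_pair H (hV u hu _ (h (by simp [pairW])) hu'.1) (hV u hu _ (h (by simp [pairW])) hu'.2) t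

lemma not_mem_pair (H : Compl c) {V : Finset (Fin d → S)} (hV : IsCode c V) {r : Fin d → S}
    {i : Fin d} {s : S} (h : pairW c r i s ⊆ V) {u : Fin d → S} (hu : u ∈ V)
    (hu' : u ∉ pairW c r i s) (t : S) : u ∉ pairW c r i t := by
  intro h'
  rw [mem_pairW] at h'
  rcases h' with h' | h'
  · exact not_dich_self H u (by have := dich_pair_all H hV h hu hu' t; rwa [← h'] at this)
  · exact not_dich_self H u (by have := dich_pair_all H hV h hu hu' (c t); rwa [← h'] at this)

lemma isCode_step (H : Compl c) {V : Finset (Fin d → S)} (hV : IsCode c V) {r : Fin d → S}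
    {i : Fin d} {s : S} (t : S) (h : pairW c r i s ⊆ V) :
    IsCode c ((V \ pairW c r i s) ∪ pairW c r i t) := by
  have key : ∀ u ∈ V \ pairW c r i s, ∀ z ∈ pairW c r i t, Dich c u z := by
    intro u hu z hz
    rw [Finset.mem_sdiff] at hu
    rw [mem_pairW] at hz
    rcases hz with rfl | rfl
    · exact dich_pair_all H hV h hu.1 hu.2 _
    · exact dich_pair_all H hV h hu.1 hu.2 _
  intro u hu z hz hne
  rw [Finset.mem_union] at hu hz
  rcases hu with hu | hu <;> rcases hz with hz | hz
  · exact hV u (Finset.mem_sdiff.1 hu).1 z (Finset.mem_sdiff.1 hz).1 hne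
  · exact key u hu z hz
  · exact (key z hz u hu).symm H
  · rw [mem_pairW] at hu hz
    rcases hu with rfl | rfl <;> rcases hz with rfl | rfl
    · exact absurd rfl hne
    · exact ⟨i, by simp [H.inv]⟩
    · exact ⟨i, by simp⟩
    · exact absurd rfl hne

lemma cov_union {x : Fin d → Pt c} {A B : Finset (Fin d → S)} :
    Cov x (A ∪ B) ↔ Cov x A ∨ Cov x B := by
  unfold Cov
  constructor
  · rintro ⟨v, hv, hx⟩
    rw [Finset.mem_union] at hv
    exact hv.imp (fun h => ⟨v, h, hx⟩) (fun h => ⟨v, h, hx⟩)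
  · rintro (⟨v, hv, hx⟩ | ⟨v, hv, hx⟩)
    · exact ⟨v, Finset.mem_union_left _ hv, hx⟩
    · exact ⟨v, Finset.mem_union_right _ hv, hx⟩

lemma cov_pair {x : Fin d → Pt c} {r : Fin d → S} {i : Fin d} {s : S} :
    Cov x (pairW c r i s) ↔ ∀ j, j ≠ i → (x j).1 (r j) = true := by
  constructor
  · rintro ⟨v, hv, hx⟩ j hj
    have := hx j
    rw [mem_pairW] at hv
    rcases hv with rfl | rfl
    · simpa [hj] using this
    · simpa [hj] using this
  · intro h
    by_cases hs : (x i).1 s = true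
    · refine ⟨_, mem_pairW.2 (Or.inl rfl), fun j => ?_⟩
      by_cases hj : j = i
      · subst hj; simpa using hs
      · simpa [hj] using h j hj
    · refine ⟨_, mem_pairW.2 (Or.inr rfl), fun j => ?_⟩
      by_cases hj : j = i
      · subst hj; simpa [(x j).2] using hs
      · simpa [hj] using h j hj

lemma eqv_step {V : Finset (Fin d → S)} {r : Fin d → S}
    {i : Fin d} {s : S} (t : S) (h : pairW c r i s ⊆ V) :
    Eqv c V ((V \ pairW c r i s) ∪ pairW c r i t) := by
  intro x
  conv_lhs => rw [← Finset.sdiff_union_of_subset h]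
  rw [cov_union, cov_union, cov_pair, cov_pair]

lemma GC.isCode (H : Compl c) {V W : Finset (Fin d → S)} (h : GC c V W) (hV : IsCode c V) :
    IsCode c W := by
  induction h with
  | refl => exact hV
  | tail _ h2 ih =>
    obtain ⟨r, i, s, t, h3, rfl⟩ := gcstep_cases H h2
    exact isCode_step H ih t h3

lemma GC.eqv (H : Compl c) {V W : Finset (Fin d → S)} (h : GC c V W) : Eqv c V W := by
  induction h with
  | refl => exact Eqv.refl _
  | tail _ h2 ih =>
    obtain ⟨r, i, s, t, h3, rfl⟩ := gcstep_cases H h2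
    exact ih.trans (eqv_step t h3)

lemma GC.trans {V W U : Finset (Fin d → S)} (h : GC c V W) (h' : GC c W U) : GC c V U :=
  Relation.ReflTransGen.trans h h'

lemma GC.symm (H : Compl c) {V W : Finset (Fin d → S)} (h : GC c V W) (hV : IsCode c V) :
    GC c W V := by
  induction h with
  | refl => exact Relation.ReflTransGen.refl
  | @tail B B2 h1 h2 ih =>
    refine GC.trans (Relation.ReflTransGen.single ?_) ih
    have hB := GC.isCode H h1 hV
    obtain ⟨r, i, s, t, h3, rfl⟩ := gcstep_cases H h2
    have h4 := gcstep_mk H (V := (B \ pairW c r i s) ∪ pairW c r i t) (r := r) (i := i) (s := t) s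
      Finset.subset_union_right
    convert h4 using 1
    rw [Finset.union_sdiff_right, Finset.sdiff_eq_self_of_disjoint, Finset.sdiff_union_of_subset h3]
    rw [Finset.disjoint_left]
    intro u hu
    rw [Finset.mem_sdiff] at hu
    exact not_mem_pair H hB h3 hu.1 hu.2 t

lemma gc_union_aux (H : Compl c) {A B R : Finset (Fin d → S)} (h : GC c A B)
    (hc : IsCode c (A ∪ R)) (hd : Disjoint A R) :
    GC c (A ∪ R) (B ∪ R) ∧ IsCode c (B ∪ R) ∧ Disjoint B R := by
  induction h with
  | refl => exact ⟨Relation.ReflTransGen.refl, hc, hd⟩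
  | @tail B B2 _ h2 ih =>
    obtain ⟨ih1, ih2, ih3⟩ := ih
    obtain ⟨r, i, s, t, h3, rfl⟩ := gcstep_cases H h2
    have h3' : pairW c r i s ⊆ B ∪ R := h3.trans Finset.subset_union_left
    have hpR : ∀ u ∈ R, u ∉ pairW c r i s := fun u hu hu' =>
      Finset.disjoint_left.1 ih3 (h3 hu') hu
    have e : (B \ pairW c r i s ∪ pairW c r i t) ∪ R
        = ((B ∪ R) \ pairW c r i s) ∪ pairW c r i t := by
      ext u
      have := hpR u
      simp only [Finset.mem_union, Finset.mem_sdiff]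
      tauto
    refine ⟨?_, ?_, ?_⟩
    · rw [e]
      exact GC.trans ih1 (Relation.ReflTransGen.single (gcstep_mk H t h3'))
    · rw [e]; exact isCode_step H ih2 t h3'
    · rw [Finset.disjoint_left] at ih3 ⊢
      intro u hu huR
      rw [Finset.mem_union, Finset.mem_sdiff] at hu
      rcases hu with hu | hu
      · exact ih3 hu.1 huR
      · exact not_mem_pair H ih2 h3' (Finset.mem_union_right _ huR) (hpR u huR) t hu

lemma gc_union (H : Compl c) {A B R : Finset (Fin d → S)} (h : GC c A B)
    (hc : IsCode c (A ∪ R)) (hd : Disjoint A R) : GC c (A ∪ R) (B ∪ R) :=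
  (gc_union_aux H h hc hd).1

/-- change the letters of all words at position `i` -/
def upd (i : Fin d) (s : S) (B : Finset (Fin d → S)) : Finset (Fin d → S) :=
  B.image fun w => Function.update w i s

lemma mem_upd {i : Fin d} {s : S} {B : Finset (Fin d → S)} {z : Fin d → S} :
    z ∈ upd i s B ↔ ∃ w ∈ B, Function.update w i s = z := by simp [upd]

lemma upd_upd {i : Fin d} {s t : S} {B : Finset (Fin d → S)} : upd i s (upd i t B) = upd i s B := by
  simp [upd, Finset.image_image, Function.comp_def]

lemma upd_self {i : Fin d} {s : S} {B : Finset (Fin d → S)} (h : ∀ b ∈ B, b i = s) :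
    upd i s B = B := by
  unfold upd
  conv_rhs => rw [← Finset.image_id (s := B)]
  apply Finset.image_congr
  intro b hb
  have := h b hb
  subst this
  simp

lemma flip_lemma (H : Compl c) {i : Fin d} {s : S} (t : S) (B : Finset (Fin d → S))
    (hB : ∀ b ∈ B, b i = s) (hc : IsCode c (B ∪ upd i (c s) B)) :
    GC c (B ∪ upd i (c s) B) (upd i t B ∪ upd i (c t) B) := by
  induction B using Finset.induction_on with
  | empty => simp only [upd, Finset.image_empty]; exact Relation.ReflTransGen.refl
  | insert r B hr ih =>
    have hrs : Function.update r i s = r := by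
      rw [← hB r (Finset.mem_insert_self _ _)]; simp
    have hr' : r i = s := hB r (Finset.mem_insert_self _ _)
    have hB' : ∀ b ∈ B, b i = s := fun b hb => hB b (Finset.mem_insert_of_mem hb)
    have e1 : insert r B ∪ upd i (c s) (insert r B) = pairW c r i s ∪ (B ∪ upd i (c s) B) := by
      ext z
      simp only [upd, pairW, Finset.image_insert, Finset.mem_union, Finset.mem_insert,
        Finset.mem_singleton, hrs]
      tauto
    have e2 : upd i t (insert r B) ∪ upd i (c t) (insert r B)
        = pairW c r i t ∪ (upd i t B ∪ upd i (c t) B) := by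
      ext z
      simp only [upd, pairW, Finset.image_insert, Finset.mem_union, Finset.mem_insert,
        Finset.mem_singleton]
      tauto
    rw [e1] at hc ⊢
    rw [e2]
    have hd : Disjoint (pairW c r i s) (B ∪ upd i (c s) B) := by
      rw [Finset.disjoint_left]
      intro z hz hz'
      rw [mem_pairW, hrs] at hz
      rw [Finset.mem_union, mem_upd] at hz'
      rcases hz with rfl | rfl
      · rcases hz' with h | ⟨b, hb, h⟩
        · exact hr h
        · rw [← h] at hr'
          simp only [Function.update_self] at hr'
          exact H.ne _ hr'
      · rcases hz' with h | ⟨b, hb, h⟩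
        · have := hB' _ h
          simp only [Function.update_self] at this
          exact H.ne _ this
        · have h5 : b = r := by
            funext j
            by_cases hj : j = i
            · subst hj; rw [hB' b hb, hr']
            · have := congrFun h j
              simpa [hj] using this
          exact hr (h5 ▸ hb)
    have h1 : GC c (pairW c r i s ∪ (B ∪ upd i (c s) B)) (pairW c r i t ∪ (B ∪ upd i (c s) B)) := by
      refine gc_union H (Relation.ReflTransGen.single ?_) hc hd
      have := gcstep_mk H (V := pairW c r i s) (r := r) (i := i) (s := s) t subset_rfl
      simpa using this
    obtain ⟨-, hc2, hd2⟩ := gc_union_aux H (B := pairW c r i t) (Relation.ReflTransGen.single (by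
      have := gcstep_mk H (V := pairW c r i s) (r := r) (i := i) (s := s) t subset_rfl
      simpa using this)) hc hd
    refine h1.trans ?_
    rw [Finset.union_comm (pairW c r i t), Finset.union_comm (pairW c r i t)]
    refine gc_union H (ih hB' (hc.mono ?_)) ?_ hd2.symm
    · exact Finset.subset_union_right
    · rwa [Finset.union_comm]

/-- number of bad letters of a word -/
def badw (G : Fin d → Finset S) (p : Fin d → S) : ℕ := (Finset.univ.filter fun i => p i ∉ G i).card

/-- number of bad letters of a code -/
def bad (G : Fin d → Finset S) (P : Finset (Fin d → S)) : ℕ := ∑ p ∈ P, badw G p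

lemma badw_update (G : Fin d → Finset S) {p : Fin d → S} {i : Fin d} {t : S} (h : p i ∉ G i)
    (ht : t ∈ G i) : badw G (Function.update p i t) + 1 ≤ badw G p := by
  unfold badw
  apply Finset.card_lt_card
  rw [Finset.ssubset_iff_of_subset]
  · exact ⟨i, by simpa using h, by simpa using ht⟩
  · intro j hj
    simp only [Finset.mem_filter, Finset.mem_univ, true_and] at hj ⊢
    by_cases hji : j = i
    · subst hji; exact h
    · simpa [hji] using hj

lemma badw_update_bad (G : Fin d → Finset S) {p : Fin d → S} {i : Fin d} {t : S} (h : p i ∉ G i)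
    (ht : t ∉ G i) : badw G (Function.update p i t) = badw G p := by
  unfold badw
  congr 1
  ext j
  simp only [Finset.mem_filter, Finset.mem_univ, true_and]
  by_cases hji : j = i
  · subst hji; simp [h, ht]
  · simp [hji]

lemma bad_union_le (G : Fin d → Finset S) (A B : Finset (Fin d → S)) :
    bad G (A ∪ B) ≤ bad G A + bad G B := by
  unfold bad
  have := Finset.sum_union_inter (s₁ := A) (s₂ := B) (f := badw G)
  omega

lemma bad_upd_le (G : Fin d → Finset S) {i : Fin d} {t : S} {B : Finset (Fin d → S)}
    (h : ∀ p ∈ B, p i ∉ G i) (ht : t ∈ G i) : bad G (upd i t B) + B.card ≤ bad G B := by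
  unfold bad upd
  have h1 : ∑ p ∈ B.image (fun w => Function.update w i t), badw G p
      ≤ ∑ p ∈ B, badw G (Function.update p i t) := Finset.sum_image_le_of_nonneg (by simp)
  have h2 : ∑ p ∈ B, (badw G (Function.update p i t) + 1) ≤ ∑ p ∈ B, badw G p :=
    Finset.sum_le_sum fun p hp => badw_update G (h p hp) ht
  rw [Finset.sum_add_distrib] at h2
  simp at h2
  omega

lemma step_lemma (H : Compl c) {P : Finset (Fin d → S)} (hP : IsCode c P) (G : Fin d → Finset S)
    (hG : ∀ i, ∀ s ∈ G i, c s ∈ G i) {i : Fin d} {s t : S} (hs : s ∉ G i) (ht : t ∈ G i)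
    (hne : (P.filter fun w => w i = c s).Nonempty)
    (hbad : bad G (P.filter fun w => w i = c s) ≤ bad G (P.filter fun w => w i = s))
    (hgc : GC c (P.filter fun w => w i = s) (upd i s (P.filter fun w => w i = c s))) :
    ∃ P1, GC c P P1 ∧ bad G P1 < bad G P := by
  have hcs : c s ∉ G i := fun h => hs (by have := hG i _ h; rwa [H.inv] at this)
  set A := P.filter fun w => w i = s with hA
  set A' := P.filter fun w => w i = c s with hA'
  set R := P.filter fun w => w i ≠ s ∧ w i ≠ c s with hR
  have hPe : P = A ∪ (A' ∪ R) := by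
    ext z
    simp only [hA, hA', hR, Finset.mem_union, Finset.mem_filter]
    tauto
  have hd1 : Disjoint A (A' ∪ R) := by
    rw [Finset.disjoint_left]
    intro z hz hz'
    simp only [hA, hA', hR, Finset.mem_union, Finset.mem_filter] at hz hz'
    rcases hz' with h | h
    · exact H.ne s (h.2.symm.trans hz.2)
    · exact h.2.1 hz.2
  have hd2 : Disjoint A' R := by
    rw [Finset.disjoint_left]
    intro z hz hz'
    simp only [hA', hR, Finset.mem_filter] at hz hz'
    exact hz'.2.2 hz.2
  obtain ⟨h1, h2, h3⟩ := gc_union_aux H hgc (R := A' ∪ R) (by rw [← hPe]; exact hP) hd1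
  rw [← hPe] at h1
  set B := upd i s A' with hB
  have e1 : upd i (c s) B = A' := by
    rw [hB, upd_upd, upd_self]
    intro b hb
    exact (Finset.mem_filter.1 hb).2
  have hBs : ∀ b ∈ B, b i = s := by
    intro b hb
    rw [hB, mem_upd] at hb
    obtain ⟨w, -, rfl⟩ := hb
    simp
  have h4 : GC c ((B ∪ upd i (c s) B) ∪ R) ((upd i t B ∪ upd i (c t) B) ∪ R) := by
    refine gc_union H (flip_lemma H t B hBs ?_) ?_ ?_
    · rw [e1]; apply h2.mono; rw [← Finset.union_assoc]; exact Finset.subset_union_left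
    · rw [e1, Finset.union_assoc]; exact h2
    · rw [e1, Finset.disjoint_union_left]
      refine ⟨?_, hd2⟩
      exact Finset.disjoint_of_subset_right Finset.subset_union_right h3
  rw [e1, Finset.union_assoc] at h4
  refine ⟨_, h1.trans h4, ?_⟩
  have b1 : bad G P = bad G A + (bad G A' + bad G R) := by
    conv_lhs => rw [hPe]
    unfold bad
    rw [Finset.sum_union hd1, Finset.sum_union hd2]
  have hA'b : ∀ p ∈ A', p i ∉ G i := by
    intro p hp
    rw [(Finset.mem_filter.1 hp).2]; exact hcs
  have e2 : upd i t B = upd i t A' := upd_upd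
  have e3 : upd i (c t) B = upd i (c t) A' := upd_upd
  have b2 := bad_upd_le G hA'b ht
  have b3 := bad_upd_le G hA'b (hG i t ht)
  have b4 := bad_union_le G (upd i t B ∪ upd i (c t) B) R
  have b5 := bad_union_le G (upd i t B) (upd i (c t) B)
  rw [e2, e3] at b5 b4
  rw [e2, e3]
  have := hne.card_pos
  omega

/-- removal of bad letters, using a strong equivalence of the smaller parts -/
lemma reduce (H : Compl c) {P Q : Finset (Fin d → S)} (hP : IsCode c P) (hQ : IsCode c Q)
    (h : Eqv c P Q) (G : Fin d → Finset S)
    (hG : ∀ i, ∀ s ∈ G i, c s ∈ G i) (hQG : ∀ q ∈ Q, ∀ i, q i ∈ G i) {i : Fin d}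
    (hne : (G i).Nonempty) {p : Fin d → S} (hp : p ∈ P) (hpi : p i ∉ G i)
    (hgc : ∀ u, u ∉ G i → ∀ B, IsCode c B → Eqv c (P.filter fun w => w i = u) B →
      (∀ b ∈ B, b i = u) → 2 * (P.filter fun w => w i = u).card ≤ P.card →
      (∃ p ∈ P, p i = u) →
      GC c (P.filter fun w => w i = u) B) :
    ∃ P1, GC c P P1 ∧ bad G P1 < bad G P := by
  obtain ⟨t, ht⟩ := hne
  have key : ∀ u, u ∉ G i → Eqv c (P.filter fun w => w i = u)
      (upd i u (P.filter fun w => w i = c u)) ∧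
      IsCode c (upd i u (P.filter fun w => w i = c u)) := by
    intro u hu
    have h1 := exchange H hP hQ h i u (by
      intro q hq h'
      have := hG i _ (hQG q hq i)
      rw [h', H.inv] at this
      exact hu this)
    have h2 : (Q.filter fun w => w i = u) = ∅ := by
      rw [Finset.filter_eq_empty_iff]
      intro q hq h'
      exact hu (h' ▸ hQG q hq i)
    rw [h2, Finset.empty_union] at h1
    exact h1
  have hcG : ∀ u, u ∉ G i → c u ∉ G i := by
    intro u hu h'
    have := hG i _ h'
    rw [H.inv] at this
    exact hu this
  have hcard : ∀ u, u ∉ G i → (P.filter fun w => w i = u).card ≤ (P.filter fun w => w i = c u).card := by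
    intro u hu
    rw [card_eq_of_eqv H (hP.mono (Finset.filter_subset _ _)) (key u hu).2 (key u hu).1]
    exact Finset.card_image_le
  have hcard2 : ∀ u, u ∉ G i → 2 * (P.filter fun w => w i = u).card ≤ P.card := by
    intro u hu
    have h1 := hcard u hu
    have h2 : Disjoint (P.filter fun w => w i = u) (P.filter fun w => w i = c u) := by
      rw [Finset.disjoint_left]
      intro z hz hz'
      rw [Finset.mem_filter] at hz hz'
      exact H.ne u (hz'.2.symm.trans hz.2)
    have h3 := Finset.card_union_of_disjoint h2
    have h4 := Finset.card_le_card (Finset.union_subset (Finset.filter_subset (fun w => w i = u) P)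
      (Finset.filter_subset (fun w => w i = c u) P))
    omega
  have hgc' : ∀ u, u ∉ G i → (P.filter fun w => w i = u).Nonempty →
      GC c (P.filter fun w => w i = u) (upd i u (P.filter fun w => w i = c u)) := by
    rintro u hu ⟨z, hz⟩
    refine hgc u hu _ (key u hu).2 (key u hu).1 ?_ (hcard2 u hu) ?_
    · intro b hb
      rw [mem_upd] at hb
      obtain ⟨w, -, rfl⟩ := hb
      simp
    · rw [Finset.mem_filter] at hz
      exact ⟨z, hz⟩
  have hne1 : (P.filter fun w => w i = p i).Nonempty := ⟨p, by simp [hp]⟩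
  have hne2 : (P.filter fun w => w i = c (p i)).Nonempty := by
    rw [← Finset.card_pos] at hne1 ⊢
    exact lt_of_lt_of_le hne1 (hcard _ hpi)
  rcases le_total (bad G (P.filter fun w => w i = c (p i))) (bad G (P.filter fun w => w i = p i))
    with hle | hle
  · exact step_lemma H hP G hG hpi ht hne2 hle (hgc' _ hpi hne1)
  · apply step_lemma H hP G hG (hcG _ hpi) ht
    · rw [H.inv]; exact hne1
    · rw [H.inv]; exact hle
    · exact hgc' _ (hcG _ hpi) hne2

/-- a common word reduces the problem -/
lemma gc_of_common (H : Compl c) {P Q : Finset (Fin d → S)} (hP : IsCode c P)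
    {q : Fin d → S} (hq : q ∈ P) (hq' : q ∈ Q)
    (hgc : GC c (P \ {q}) (Q \ {q})) : GC c P Q := by
  have e1 : P = (P \ {q}) ∪ {q} := (Finset.sdiff_union_of_subset (by simpa using hq)).symm
  have e2 : Q = (Q \ {q}) ∪ {q} := (Finset.sdiff_union_of_subset (by simpa using hq')).symm
  rw [e1, e2]
  exact gc_union H hgc (by rw [← e1]; exact hP) Finset.sdiff_disjoint

end PolyboxPaper

namespace PolyboxPaper
set_option linter.unusedSectionVars false
variable {S : Type} [Fintype S] [DecidableEq S] {d : ℕ} {c : S → S}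

/-! ### twin free covers of a word -/

/-- a twin pair free cover of a word -/
structure Cvr (c : S → S) (C : Finset (Fin d → S)) (q : Fin d → S) : Prop where
  code : IsCode c C
  nd : ∀ p ∈ C, ¬ Dich c p q
  cov : ∀ x : Fin d → Pt c, Mem x q → Cov x C
  tf : ∀ v ∈ C, ∀ w ∈ C, ∀ i, ¬ TwinPair c v w i
  nm : q ∉ C

lemma Cvr.dich (H : Compl c) {C : Finset (Fin d → S)} {q : Fin d → S} (h : Cvr c C q)
    {p r : Fin d → S} (hp : p ∈ C) (hr : r ∈ C) (hne : p ≠ r) :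
    ∃ i, p i = c (r i) ∧ i ∈ supp q p ∧ i ∈ supp q r := by
  obtain ⟨i, hi⟩ := h.code p hp r hr hne
  refine ⟨i, hi, ?_, ?_⟩
  · rw [mem_supp]
    intro h'
    exact h.nd r hr ⟨i, by rw [← h', hi, H.inv]⟩
  · rw [mem_supp]
    intro h'
    exact h.nd p hp ⟨i, by rw [hi, h']⟩

lemma Cvr.single (H : Compl c) {C : Finset (Fin d → S)} {q : Fin d → S} (h : Cvr c C q)
    {p r : Fin d → S} (hp : p ∈ C) (hr : r ∈ C) (hne : r ≠ p) {i : Fin d} (hi : supp q p = {i}) :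
    r i = c (p i) := by
  obtain ⟨j, hj, -, hj'⟩ := h.dich H hr hp hne
  rw [hi, Finset.mem_singleton] at hj'
  rw [← hj', hj]

lemma Cvr.peel (H : Compl c) {C : Finset (Fin d → S)} {q : Fin d → S} (h : Cvr c C q)
    {p : Fin d → S} (hp : p ∈ C) {i : Fin d} (hi : supp q p = {i}) :
    Cvr c (C.erase p) (Function.update q i (c (p i))) := by
  have hpi : p i ≠ q i := mem_supp.1 (by rw [hi]; simp)
  have hpi' : p i ≠ c (q i) := fun h' => h.nd p hp ⟨i, h'⟩
  have hpj : ∀ j, j ≠ i → p j = q j := by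
    intro j hj
    by_contra h'
    have := mem_supp.2 h'
    rw [hi, Finset.mem_singleton] at this
    exact hj this
  refine ⟨h.code.mono (Finset.erase_subset _ _), ?_, ?_, ?_, ?_⟩
  · rintro r hr ⟨j, hj⟩
    rw [Finset.mem_erase] at hr
    by_cases hji : j = i
    · subst hji
      rw [Function.update_self, h.single H hp hr.2 hr.1 hi] at hj
      exact H.ne _ hj.symm
    · rw [Function.update_of_ne hji] at hj
      exact h.nd r hr.2 ⟨j, hj⟩
  · intro x hx
    have hxi : (x i).1 (c (p i)) = true := by simpa using hx i
    have h1 : (setT H (x i) (q i)).1 (c (p i)) = true := by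
      rw [setT_other H]
      · exact hxi
      · intro h'; exact hpi' (by rw [← h', H.inv])
      · intro h'; exact hpi (H.inj h')
    obtain ⟨r, hr, hxr⟩ := h.cov (Function.update x i (setT H (x i) (q i))) (by
      intro j
      by_cases hj : j = i
      · subst hj; simpa using setT_self H _ _
      · simpa [hj] using hx j)
    have hrp : r ≠ p := by
      rintro rfl
      have := hxr i
      rw [Function.update_self] at this
      rw [(setT H (x i) (q i)).2, this] at h1
      simp at h1
    refine ⟨r, Finset.mem_erase.2 ⟨hrp, hr⟩, ?_⟩
    intro j
    by_cases hj : j = i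
    · subst hj; rw [h.single H hp hr hrp hi]; exact hxi
    · simpa [hj] using hxr j
  · intro v hv w hw
    exact h.tf v (Finset.mem_of_mem_erase hv) w (Finset.mem_of_mem_erase hw)
  · intro h'
    refine h.tf p hp _ (Finset.mem_of_mem_erase h') i ⟨?_, ?_⟩
    · simp [H.inv]
    · intro j hj
      simp [hj, hpj j hj]

lemma exists_pair_of_card_two {A : Finset (Fin d)} (h : A.card = 2) {i : Fin d} (hi : i ∈ A) :
    ∃ j, j ≠ i ∧ A = {i, j} := by
  obtain ⟨a, b, hab, rfl⟩ := Finset.card_eq_two.1 h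
  simp only [Finset.mem_insert, Finset.mem_singleton] at hi
  rcases hi with rfl | rfl
  · exact ⟨b, hab.symm, rfl⟩
  · exact ⟨a, hab, Finset.pair_comm _ _⟩

lemma eq_of_not_supp {q p : Fin d → S} {i : Fin d} (h : i ∉ supp q p) : p i = q i := by
  by_contra h'
  exact h (mem_supp.2 h')

/-- two words with the same support of size two -/
lemma Cvr.same_supp (H : Compl c) {C : Finset (Fin d → S)} {q : Fin d → S} (h : Cvr c C q)
    {x y z : Fin d → S} (hx : x ∈ C) (hy : y ∈ C) (hz : z ∈ C) (hxy : x ≠ y) (hzx : z ≠ x)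
    (hzy : z ≠ y) (h2 : (supp q x).card = 2) (hs : supp q x = supp q y) :
    supp q x ⊆ supp q z ∧ (supp q z).card ≠ 2 := by
  obtain ⟨i, hi, hi1, hi2⟩ := h.dich H hx hy hxy
  obtain ⟨j, hji, hA⟩ := exists_pair_of_card_two h2 hi1
  rw [hA] at hs
  have out : ∀ {w : Fin d → S}, supp q w = {i, j} → ∀ m, m ≠ i → m ≠ j → w m = q m := by
    intro w hw m hm hm'
    apply eq_of_not_supp
    rw [hw]; simp [hm, hm']
  have hxyj : x j ≠ y j := by
    intro h'
    refine h.tf x hx y hy i ⟨hi, fun m hm => ?_⟩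
    by_cases hmj : m = j
    · rw [hmj, h']
    · rw [out hA m hm hmj, out hs.symm m hm hmj]
  -- the letters of z
  have main : (z i = y i ∧ z j = c (y j) ∧ i ∈ supp q z ∧ j ∈ supp q z) ∨
      (z i = x i ∧ z j = c (x j) ∧ i ∈ supp q z ∧ j ∈ supp q z) := by
    obtain ⟨m, hm, hm1, hm2⟩ := h.dich H hz hx hzx
    obtain ⟨n, hn, hn1, hn2⟩ := h.dich H hz hy hzy
    rw [hA] at hm2
    rw [← hs] at hn2
    simp only [Finset.mem_insert, Finset.mem_singleton] at hm2 hn2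
    rcases hm2 with rfl | rfl <;> rcases hn2 with rfl | rfl
    · rw [hm, hi, H.inv] at hn
      exact absurd hn.symm (H.ne _)
    · left
      exact ⟨by rw [hm, hi, H.inv], hn, hm1, hn1⟩
    · right
      exact ⟨by rw [hn, hi], hm, hn1, hm1⟩
    · rw [hm] at hn
      exact absurd (H.inj hn) hxyj
  have hsub : supp q x ⊆ supp q z := by
    intro m hm
    rw [hA] at hm
    simp only [Finset.mem_insert, Finset.mem_singleton] at hm
    rcases main with h' | h' <;> rcases hm with rfl | rfl
    exacts [h'.2.2.1, h'.2.2.2, h'.2.2.1, h'.2.2.2]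
  refine ⟨hsub, fun hz2 => ?_⟩
  have hzA : supp q z = {i, j} := by
    rw [← hA]
    exact (Finset.eq_of_subset_of_card_le hsub (by omega)).symm
  rcases main with h' | h'
  · refine h.tf z hz y hy j ⟨h'.2.1, fun m hm => ?_⟩
    by_cases hmi : m = i
    · rw [hmi, h'.1]
    · rw [out hzA m hmi hm, out hs.symm m hmi hm]
  · refine h.tf z hz x hx j ⟨h'.2.1, fun m hm => ?_⟩
    by_cases hmi : m = i
    · rw [hmi, h'.1]
    · rw [out hzA m hmi hm, out hA m hmi hm]

/-- three words with different supports of size two form a triangle -/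
lemma Cvr.triangle (H : Compl c) {C : Finset (Fin d → S)} {q : Fin d → S} (h : Cvr c C q)
    {x y z : Fin d → S} (hx : x ∈ C) (hy : y ∈ C) (hz : z ∈ C)
    (h2x : (supp q x).card = 2) (h2y : (supp q y).card = 2) (h2z : (supp q z).card = 2)
    (hxy : supp q x ≠ supp q y) (hxz : supp q x ≠ supp q z) (hyz : supp q y ≠ supp q z) :
    ∃ i j k, i ≠ j ∧ i ≠ k ∧ j ≠ k ∧ supp q x = {i, j} ∧ supp q y = {i, k} ∧ supp q z = {j, k} ∧
      x i = c (y i) ∧ x j = c (z j) ∧ y k = c (z k) := by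
  obtain ⟨i, hi, hi1, hi2⟩ := h.dich H hx hy (fun h' => hxy (by rw [h']))
  obtain ⟨j, hji, hA⟩ := exists_pair_of_card_two h2x hi1
  obtain ⟨k, hki, hB⟩ := exists_pair_of_card_two h2y hi2
  have hjk : j ≠ k := by rintro rfl; exact hxy (by rw [hA, hB])
  obtain ⟨m, hm, hm1, hm2⟩ := h.dich H hx hz (fun h' => hxz (by rw [h']))
  obtain ⟨n, hn, hn1, hn2⟩ := h.dich H hy hz (fun h' => hyz (by rw [h']))
  have hm1' := hm1
  have hn1' := hn1
  rw [hA] at hm1'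
  rw [hB] at hn1'
  simp only [Finset.mem_insert, Finset.mem_singleton] at hm1' hn1'
  have two : ∀ u v, u ≠ v → u ∈ supp q z → v ∈ supp q z → supp q z = {u, v} := by
    intro u v huv hu hv
    refine (Finset.eq_of_subset_of_card_le ?_ ?_).symm
    · intro w hw
      simp only [Finset.mem_insert, Finset.mem_singleton] at hw
      rcases hw with rfl | rfl <;> assumption
    · rw [h2z, Finset.card_pair huv]
  rcases hm1' with rfl | rfl
  · rcases hn1' with rfl | rfl
    · rw [hi, hn, H.inv] at hm
      exact absurd hm.symm (H.ne _)
    · exact absurd (by rw [hB, two m n hki.symm hm2 hn2]) hyz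
  · rcases hn1' with rfl | rfl
    · exact absurd (by rw [hA, two n m hji.symm hn2 hm2]) hxz
    · exact ⟨i, m, n, hji.symm, hki.symm, hjk, hA, hB, two m n hjk hm2 hn2, hi, hm, hn⟩

lemma Cvr.triangle_supp (H : Compl c) {C : Finset (Fin d → S)} {q : Fin d → S} (h : Cvr c C q)
    {x y z w : Fin d → S} (hx : x ∈ C) (hy : y ∈ C) (hz : z ∈ C) (hw : w ∈ C)
    (hwx : w ≠ x) (hwy : w ≠ y) (hwz : w ≠ z) {i j k : Fin d}
    (hA : supp q x = {i, j}) (hB : supp q y = {i, k}) (hD : supp q z = {j, k})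
    (hi : x i = c (y i)) (hj : x j = c (z j)) (hk : y k = c (z k)) :
    ({i, j, k} : Finset (Fin d)) ⊆ supp q w := by
  obtain ⟨a, ha, ha1, ha2⟩ := h.dich H hw hx hwx
  obtain ⟨b, hb, hb1, hb2⟩ := h.dich H hw hy hwy
  obtain ⟨e, he, he1, he2⟩ := h.dich H hw hz hwz
  rw [hA] at ha2
  rw [hB] at hb2
  rw [hD] at he2
  simp only [Finset.mem_insert, Finset.mem_singleton] at ha2 hb2 he2
  have goal : i ∈ supp q w ∧ j ∈ supp q w ∧ k ∈ supp q w → ({i, j, k} : Finset (Fin d)) ⊆ supp q w := by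
    rintro ⟨h1, h2, h3⟩ m hm
    simp only [Finset.mem_insert, Finset.mem_singleton] at hm
    rcases hm with rfl | rfl | rfl <;> assumption
  apply goal
  have hne := H.ne
  have hinv := H.inv
  rcases ha2 with rfl | rfl <;> rcases hb2 with rfl | rfl <;> rcases he2 with rfl | rfl <;>
    first
    | exact ⟨by assumption, by assumption, by assumption⟩
    | (exfalso
       grind)

lemma Cvr.n2_le (H : Compl c) {C : Finset (Fin d → S)} {q : Fin d → S} (h : Cvr c C q) :
    (C.filter fun p => (supp q p).card = 2).card ≤ 3 := by
  by_contra hcon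
  push Not at hcon
  obtain ⟨T, hT, hT4⟩ := Finset.exists_subset_card_eq (show 4 ≤ _ from hcon)
  obtain ⟨x, y, z, w, hxy, hxz, hxw, hyz, hyw, hzw, rfl⟩ := Finset.card_eq_four.1 hT4
  have hmem : ∀ v ∈ ({x, y, z, w} : Finset (Fin d → S)), v ∈ C ∧ (supp q v).card = 2 := by
    intro v hv
    simpa using hT hv
  obtain ⟨hx, hx2⟩ := hmem x (by simp)
  obtain ⟨hy, hy2⟩ := hmem y (by simp)
  obtain ⟨hz, hz2⟩ := hmem z (by simp)
  obtain ⟨hw, hw2⟩ := hmem w (by simp)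
  have e1 : supp q x ≠ supp q y := fun e =>
    (h.same_supp H hx hy hz hxy hxz.symm hyz.symm hx2 e).2 hz2
  have e2 : supp q x ≠ supp q z := fun e =>
    (h.same_supp H hx hz hy hxz hxy.symm hyz hx2 e).2 hy2
  have e3 : supp q y ≠ supp q z := fun e =>
    (h.same_supp H hy hz hx hyz hxy hxz hy2 e).2 hx2
  obtain ⟨i, j, k, hij, hik, hjk, hA, hB, hD, hi, hj, hk⟩ :=
    h.triangle H hx hy hz hx2 hy2 hz2 e1 e2 e3
  have h1 := Finset.card_le_card
    (h.triangle_supp H hx hy hz hw hxw.symm hyw.symm hzw.symm hA hB hD hi hj hk)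
  have h3 : ({i, j, k} : Finset (Fin d)).card = 3 :=
    Finset.card_eq_three.2 ⟨i, j, k, hij, hik, hjk, rfl⟩
  omega

lemma Cvr.supp_pos {C : Finset (Fin d → S)} {q : Fin d → S} (h : Cvr c C q)
    {p : Fin d → S} (hp : p ∈ C) : 1 ≤ (supp q p).card := by
  rw [Nat.one_le_iff_ne_zero]
  intro h0
  rw [Finset.card_eq_zero] at h0
  have : p = q := by
    funext i
    apply eq_of_not_supp
    rw [h0]; simp
  exact h.nm (this ▸ hp)

lemma Cvr.five_le (H : Compl c) : ∀ (n : ℕ) {C : Finset (Fin d → S)} {q : Fin d → S},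
    C.card = n → Cvr c C q → 5 ≤ C.card := by
  intro n
  induction n with
  | zero =>
    intro C q hn h
    exfalso
    obtain ⟨x, hx⟩ := exists_mem H q
    obtain ⟨p, hp, -⟩ := h.cov x hx
    rw [Finset.card_eq_zero] at hn
    simp [hn] at hp
  | succ n ih =>
    intro C q hn h
    by_cases h1 : ∃ p ∈ C, (supp q p).card = 1
    · obtain ⟨p, hp, hp1⟩ := h1
      obtain ⟨i, hi⟩ := Finset.card_eq_one.1 hp1
      have := ih (by rw [Finset.card_erase_of_mem hp]; omega) (h.peel H hp hi)
      rw [Finset.card_erase_of_mem hp] at this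
      omega
    · push Not at h1
      have h2 : ∀ p ∈ C, 2 ≤ (supp q p).card := by
        intro p hp
        have := h.supp_pos hp
        have := h1 p hp
        omega
      have hv := cover_volume H h.code h.nd h.cov
      have hle : ∀ p ∈ C, ((1 : ℚ) / 2) ^ (supp q p).card ≤ 1 / 4 := by
        intro p hp
        calc ((1 : ℚ) / 2) ^ (supp q p).card ≤ (1 / 2) ^ 2 :=
              pow_le_pow_of_le_one (by norm_num) (by norm_num) (h2 p hp)
          _ = 1 / 4 := by norm_num
      by_contra hcon
      have h4 : 4 ≤ C.card := by
        have h5 := Finset.sum_le_sum hle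
        rw [hv, Finset.sum_const, nsmul_eq_mul] at h5
        have h6 : (4 : ℚ) ≤ C.card := by linarith
        exact_mod_cast h6
      have h4' : C.card = 4 := by omega
      have hall : ∀ p ∈ C, (supp q p).card = 2 := by
        intro p hp
        by_contra hp2
        have hlt : ((1 : ℚ) / 2) ^ (supp q p).card < 1 / 4 := by
          have h3 : 3 ≤ (supp q p).card := by have := h2 p hp; omega
          calc ((1 : ℚ) / 2) ^ (supp q p).card ≤ (1 / 2) ^ 3 :=
              pow_le_pow_of_le_one (by norm_num) (by norm_num) h3
            _ < 1 / 4 := by norm_num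
        have h5 := Finset.sum_lt_sum hle ⟨p, hp, hlt⟩
        rw [hv, Finset.sum_const, nsmul_eq_mul, h4'] at h5
        norm_num at h5
      have := h.n2_le H
      rw [Finset.filter_true_of_mem hall] at this
      omega

end PolyboxPaper

namespace PolyboxPaper
set_option linter.unusedSectionVars false
variable {S : Type} [Fintype S] [DecidableEq S] {d : ℕ} {c : S → S}

lemma Cvr.counts (H : Compl c) {C : Finset (Fin d → S)} {q : Fin d → S} (h : Cvr c C q)
    {D : Finset (Fin d)} (hD : D.card = 4) (hs : ∀ p ∈ C, supp q p ⊆ D) :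
    C.card = (C.filter fun p => (supp q p).card = 1).card
        + (C.filter fun p => (supp q p).card = 2).card
        + (C.filter fun p => (supp q p).card = 3).card
        + (C.filter fun p => (supp q p).card = 4).card ∧
    16 = 8 * (C.filter fun p => (supp q p).card = 1).card
        + 4 * (C.filter fun p => (supp q p).card = 2).card
        + 2 * (C.filter fun p => (supp q p).card = 3).card
        + (C.filter fun p => (supp q p).card = 4).card := by
  have hmap : ∀ p ∈ C, (supp q p).card ∈ ({1, 2, 3, 4} : Finset ℕ) := by
    intro p hp
    have h1 := h.supp_pos hp
    have h2 := Finset.card_le_card (hs p hp)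
    rw [hD] at h2
    simp only [Finset.mem_insert, Finset.mem_singleton]
    omega
  constructor
  · have := Finset.card_eq_sum_card_fiberwise hmap
    rw [this]
    simp
    ring
  · have hv := cover_volume H h.code h.nd h.cov
    rw [← Finset.sum_fiberwise_of_maps_to hmap] at hv
    have e : ∀ k, ∑ p ∈ C.filter (fun p => (supp q p).card = k), ((1 : ℚ) / 2) ^ (supp q p).card
        = (C.filter fun p => (supp q p).card = k).card * (1 / 2) ^ k := by
      intro k
      rw [Finset.sum_congr rfl (g := fun _ => ((1 : ℚ) / 2) ^ k)]
      · rw [Finset.sum_const, nsmul_eq_mul]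
      · intro p hp
        rw [(Finset.mem_filter.1 hp).2]
    simp only [e] at hv
    rw [Finset.sum_insert (by simp), Finset.sum_insert (by simp), Finset.sum_insert (by simp),
      Finset.sum_singleton] at hv
    have : (16 : ℚ) = 8 * (C.filter fun p => (supp q p).card = 1).card
        + 4 * (C.filter fun p => (supp q p).card = 2).card
        + 2 * (C.filter fun p => (supp q p).card = 3).card
        + (C.filter fun p => (supp q p).card = 4).card := by linarith
    exact_mod_cast this

lemma double_count (E : Finset (Fin d)) (Y : Finset (Fin d → S)) (q : Fin d → S) :
    ∑ m ∈ E, (Y.filter fun y => y m = q m).card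
      = ∑ y ∈ Y, (E.filter fun m => y m = q m).card :=
  Finset.sum_card_bipartiteAbove_eq_sum_card_bipartiteBelow (fun (m : Fin d) (y : Fin d → S) => y m = q m)

lemma filter_eq_sdiff {E : Finset (Fin d)} {y q : Fin d → S} :
    (E.filter fun m => y m = q m) = E \ supp q y := by
  ext m
  simp [mem_supp]

/-- the case of three words at distance two -/
lemma Cvr.case3 (H : Compl c) {C : Finset (Fin d → S)} {q : Fin d → S} (h : Cvr c C q)
    {D : Finset (Fin d)} (hD : D.card = 4)
    (h3 : (C.filter fun p => (supp q p).card = 2).card = 3) :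
    ∃ l ∈ D, (C.filter fun p => (supp q p).card = 2).card
      + (C.filter fun p => (supp q p).card = 3).card ≤ (C.filter fun p => p l = q l).card := by
  obtain ⟨x, y, z, hxy, hxz, hyz, hT⟩ := Finset.card_eq_three.1 h3
  have hmem : ∀ v ∈ ({x, y, z} : Finset (Fin d → S)), v ∈ C ∧ (supp q v).card = 2 := by
    intro v hv
    rw [← hT] at hv
    simpa using hv
  obtain ⟨hx, hx2⟩ := hmem x (by simp)
  obtain ⟨hy, hy2⟩ := hmem y (by simp)
  obtain ⟨hz, hz2⟩ := hmem z (by simp)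
  have e1 : supp q x ≠ supp q y := fun e =>
    (h.same_supp H hx hy hz hxy hxz.symm hyz.symm hx2 e).2 hz2
  have e2 : supp q x ≠ supp q z := fun e =>
    (h.same_supp H hx hz hy hxz hxy.symm hyz hx2 e).2 hy2
  have e3 : supp q y ≠ supp q z := fun e =>
    (h.same_supp H hy hz hx hyz hxy hxz hy2 e).2 hx2
  obtain ⟨i, j, k, hij, hik, hjk, hA, hB, hE, hi, hj, hk⟩ :=
    h.triangle H hx hy hz hx2 hy2 hz2 e1 e2 e3
  have hK : ({i, j, k} : Finset (Fin d)).card = 3 :=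
    Finset.card_eq_three.2 ⟨i, j, k, hij, hik, hjk, rfl⟩
  obtain ⟨l, hl, hl'⟩ := Finset.exists_mem_notMem_of_card_lt_card (show ({i, j, k} : Finset (Fin d)).card < D.card by omega)
  have hl2 : l ≠ i ∧ l ≠ j ∧ l ≠ k := by simpa using hl'
  refine ⟨l, hl, ?_⟩
  rw [← Finset.card_union_of_disjoint]
  · apply Finset.card_le_card
    intro w hw
    rw [Finset.mem_union, Finset.mem_filter, Finset.mem_filter] at hw
    rw [Finset.mem_filter]
    rcases hw with hw | hw
    · refine ⟨hw.1, eq_of_not_supp ?_⟩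
      have : w ∈ ({x, y, z} : Finset (Fin d → S)) := by rw [← hT, Finset.mem_filter]; exact hw
      simp only [Finset.mem_insert, Finset.mem_singleton] at this
      rcases this with rfl | rfl | rfl
      · rw [hA]; simp [hl2]
      · rw [hB]; simp [hl2]
      · rw [hE]; simp [hl2]
    · refine ⟨hw.1, eq_of_not_supp ?_⟩
      have hsub := h.triangle_supp H hx hy hz hw.1 (by rintro rfl; omega) (by rintro rfl; omega)
        (by rintro rfl; omega) hA hB hE hi hj hk
      have := Finset.eq_of_subset_of_card_le hsub (by omega)
      rwa [← this]
  · rw [Finset.disjoint_left]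
    intro w hw hw'
    rw [Finset.mem_filter] at hw hw'
    omega

/-- the case of two words at distance two, four words at distance three -/
lemma Cvr.case2 (H : Compl c) {C : Finset (Fin d → S)} {q : Fin d → S} (h : Cvr c C q)
    {D : Finset (Fin d)} (hD : D.card = 4) (hs : ∀ p ∈ C, supp q p ⊆ D)
    (h2 : (C.filter fun p => (supp q p).card = 2).card = 2)
    (h3 : (C.filter fun p => (supp q p).card = 3).card = 4)
    (hcnt : ∀ i ∈ D, (C.filter fun p => p i = q i).card ≤ 3) : False := by
  obtain ⟨x, y, hxy, hT⟩ := Finset.card_eq_two.1 h2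
  have hmem : ∀ v ∈ ({x, y} : Finset (Fin d → S)), v ∈ C ∧ (supp q v).card = 2 := by
    intro v hv
    rw [← hT] at hv
    simpa using hv
  obtain ⟨hx, hx2⟩ := hmem x (by simp)
  obtain ⟨hy, hy2⟩ := hmem y (by simp)
  set Y := C.filter fun p => (supp q p).card = 3 with hY
  have hYm : ∀ w ∈ Y, w ∈ C ∧ (supp q w).card = 3 := fun w hw => Finset.mem_filter.1 hw
  have hYx : ∀ w ∈ Y, w ≠ x := by rintro w hw rfl; have := (hYm w hw).2; omega
  have hYy : ∀ w ∈ Y, w ≠ y := by rintro w hw rfl; have := (hYm w hw).2; omega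
  have hsd : ∀ w ∈ Y, (D \ supp q w).card = 1 := by
    intro w hw
    rw [Finset.card_sdiff_of_subset (hs w (hYm w hw).1), hD, (hYm w hw).2]
  by_cases hss : supp q x = supp q y
  · -- same support
    have hsub : ∀ w ∈ Y, supp q x ⊆ supp q w := fun w hw =>
      (h.same_supp H hx hy (hYm w hw).1 hxy (hYx w hw) (hYy w hw) hx2 hss).1
    have hE : (D \ supp q x).card = 2 := by
      rw [Finset.card_sdiff_of_subset (hs x hx), hD, hx2]
    have hdc := double_count (D \ supp q x) (insert x (insert y Y)) q
    have hxn : x ∉ insert y Y := by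
      rw [Finset.mem_insert, not_or]
      exact ⟨hxy, fun h' => hYx x h' rfl⟩
    have hyn : y ∉ Y := fun h' => hYy y h' rfl
    rw [Finset.sum_insert hxn, Finset.sum_insert hyn] at hdc
    have hle : ∑ m ∈ D \ supp q x, ((insert x (insert y Y)).filter fun w => w m = q m).card
        ≤ ∑ m ∈ D \ supp q x, 3 := by
      apply Finset.sum_le_sum
      intro m hm
      refine le_trans (Finset.card_le_card ?_) (hcnt m (Finset.mem_sdiff.1 hm).1)
      apply Finset.filter_subset_filter
      intro w hw
      rw [Finset.mem_insert, Finset.mem_insert] at hw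
      rcases hw with rfl | rfl | hw
      exacts [hx, hy, (hYm w hw).1]
    have hYs : ∑ w ∈ Y, ((D \ supp q x).filter fun m => w m = q m).card = ∑ w ∈ Y, 1 := by
      apply Finset.sum_congr rfl
      intro w hw
      rw [filter_eq_sdiff, ← hsd w hw]
      congr 1
      ext m
      have : m ∈ supp q x → m ∈ supp q w := fun hm => hsub w hw hm
      simp only [Finset.mem_sdiff]
      tauto
    rw [hYs, filter_eq_sdiff, filter_eq_sdiff, ← hss, sdiff_idem, hE] at hdc
    rw [hdc] at hle
    simp only [Finset.sum_const, smul_eq_mul, hE, h3] at hle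
    omega
  · obtain ⟨i, hi, hi1, hi2⟩ := h.dich H hx hy hxy
    obtain ⟨j, hji, hA⟩ := exists_pair_of_card_two hx2 hi1
    obtain ⟨k, hki, hB⟩ := exists_pair_of_card_two hy2 hi2
    have hjk : j ≠ k := by rintro rfl; exact hss (by rw [hA, hB])
    have hK : ({i, j, k} : Finset (Fin d)).card = 3 :=
      Finset.card_eq_three.2 ⟨i, j, k, hji.symm, hki.symm, hjk, rfl⟩
    obtain ⟨l, hl, hl'⟩ := Finset.exists_mem_notMem_of_card_lt_card
      (show ({i, j, k} : Finset (Fin d)).card < D.card by omega)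
    have hl2 : l ≠ i ∧ l ≠ j ∧ l ≠ k := by simpa using hl'
    have hiD : i ∈ D := hs x hx (by rw [hA]; simp)
    have hjD : j ∈ D := hs x hx (by rw [hA]; simp)
    have hkD : k ∈ D := hs y hy (by rw [hB]; simp)
    have hDe : D = {i, j, k, l} := by
      refine (Finset.eq_of_subset_of_card_le ?_ ?_).symm
      · intro m hm
        simp only [Finset.mem_insert, Finset.mem_singleton] at hm
        rcases hm with rfl | rfl | rfl | rfl <;> assumption
      · rw [hD, Finset.card_eq_four.2 ⟨i, j, k, l, hji.symm, hki.symm, hl2.1.symm, hjk,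
          hl2.2.1.symm, hl2.2.2.symm, rfl⟩]
    have hne := H.ne
    have hinv := H.inv
    -- conditions against x and y
    have cx : ∀ w ∈ C, w ≠ x → (w i = c (x i) ∧ w i ≠ q i) ∨ (w j = c (x j) ∧ w j ≠ q j) := by
      intro w hw hwx
      obtain ⟨m, hm, hm1, hm2⟩ := h.dich H hw hx hwx
      rw [hA] at hm2
      rw [mem_supp] at hm1
      simp only [Finset.mem_insert, Finset.mem_singleton] at hm2
      rcases hm2 with rfl | rfl
      · exact Or.inl ⟨hm, hm1⟩
      · exact Or.inr ⟨hm, hm1⟩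
    have cy : ∀ w ∈ C, w ≠ y → (w i = c (y i) ∧ w i ≠ q i) ∨ (w k = c (y k) ∧ w k ≠ q k) := by
      intro w hw hwx
      obtain ⟨m, hm, hm1, hm2⟩ := h.dich H hw hy hwx
      rw [hB] at hm2
      rw [mem_supp] at hm1
      simp only [Finset.mem_insert, Finset.mem_singleton] at hm2
      rcases hm2 with rfl | rfl
      · exact Or.inl ⟨hm, hm1⟩
      · exact Or.inr ⟨hm, hm1⟩
    have ki : ∀ w ∈ Y, w i = q i → w j = c (x j) ∧ w k = c (y k) := by
      intro w hw hwi
      have h1 := cx w (hYm w hw).1 (hYx w hw)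
      have h2 := cy w (hYm w hw).1 (hYy w hw)
      exact ⟨by tauto, by tauto⟩
    have kj : ∀ w ∈ Y, w j = q j → w i = c (x i) ∧ w k = c (y k) := by
      intro w hw hwi
      have h1 := cx w (hYm w hw).1 (hYx w hw)
      have h2 := cy w (hYm w hw).1 (hYy w hw)
      have h3 : w i = c (x i) := by tauto
      refine ⟨h3, ?_⟩
      rcases h2 with h2 | h2
      · rw [h3, hi, H.inv] at h2
        exact absurd h2.1.symm (H.ne _)
      · exact h2.1
    have kk : ∀ w ∈ Y, w k = q k → w i = x i ∧ w j = c (x j) := by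
      intro w hw hwi
      have h1 := cx w (hYm w hw).1 (hYx w hw)
      have h2 := cy w (hYm w hw).1 (hYy w hw)
      have h3 : w i = x i := by rw [hi]; tauto
      refine ⟨h3, ?_⟩
      rcases h1 with h1 | h1
      · rw [h3] at h1
        exact absurd h1.1.symm (H.ne _)
      · exact h1.1
    have out : ∀ w ∈ C, ∀ m, m ∉ D → w m = q m := fun w hw m hm =>
      eq_of_not_supp fun h' => hm (hs w hw h')
    -- two words of the same kind agree
    have agree : ∀ w ∈ Y, ∀ w' ∈ Y, w i = w' i → w j = w' j → w k = w' k → w = w' := by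
      intro w hw w' hw' e1 e2 e3
      by_contra hww
      obtain ⟨m, hm⟩ := h.code w (hYm w hw).1 w' (hYm w' hw').1 hww
      have ho : ∀ n, n ≠ l → w n = w' n := by
        intro n hn
        by_cases hnD : n ∈ D
        · rw [hDe] at hnD
          simp only [Finset.mem_insert, Finset.mem_singleton] at hnD
          rcases hnD with rfl | rfl | rfl | rfl
          · exact e1
          · exact e2
          · exact e3
          · exact absurd rfl hn
        · rw [out w (hYm w hw).1 n hnD, out w' (hYm w' hw').1 n hnD]
      have hml : m = l := by
        by_contra hml
        rw [ho m hml] at hm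
        exact H.ne _ hm.symm
      subst hml
      exact h.tf w (hYm w hw).1 w' (hYm w' hw').1 m ⟨hm, ho⟩
    have hone : ∀ m ∈ D, (Y.filter fun w => w m = q m).card ≤ 1 := by
      intro m hm
      rw [hDe] at hm
      simp only [Finset.mem_insert, Finset.mem_singleton] at hm
      rcases hm with rfl | rfl | rfl | rfl
      · rw [Finset.card_le_one]
        intro w hw w' hw'
        rw [Finset.mem_filter] at hw hw'
        have a1 := ki w hw.1 hw.2
        have a2 := ki w' hw'.1 hw'.2
        exact agree w hw.1 w' hw'.1 (by rw [hw.2, hw'.2]) (by rw [a1.1, a2.1]) (by rw [a1.2, a2.2])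
      · rw [Finset.card_le_one]
        intro w hw w' hw'
        rw [Finset.mem_filter] at hw hw'
        have a1 := kj w hw.1 hw.2
        have a2 := kj w' hw'.1 hw'.2
        exact agree w hw.1 w' hw'.1 (by rw [a1.1, a2.1]) (by rw [hw.2, hw'.2]) (by rw [a1.2, a2.2])
      · rw [Finset.card_le_one]
        intro w hw w' hw'
        rw [Finset.mem_filter] at hw hw'
        have a1 := kk w hw.1 hw.2
        have a2 := kk w' hw'.1 hw'.2
        exact agree w hw.1 w' hw'.1 (by rw [a1.1, a2.1]) (by rw [a1.2, a2.2]) (by rw [hw.2, hw'.2])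
      · have h5 := hcnt m hl
        have h6 : ({x, y} ∪ Y.filter fun w => w m = q m) ⊆ C.filter fun w => w m = q m := by
          intro w hw
          rw [Finset.mem_union, Finset.mem_filter] at hw
          rw [Finset.mem_filter]
          rcases hw with hw | hw
          · simp only [Finset.mem_insert, Finset.mem_singleton] at hw
            rcases hw with rfl | rfl
            · exact ⟨hx, eq_of_not_supp (by rw [hA]; simp [hl2])⟩
            · exact ⟨hy, eq_of_not_supp (by rw [hB]; simp [hl2])⟩
          · exact ⟨(hYm w hw.1).1, hw.2⟩
        have h7 := Finset.card_le_card h6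
        rw [Finset.card_union_of_disjoint, Finset.card_pair hxy] at h7
        · omega
        · rw [Finset.disjoint_left]
          intro w hw hw'
          rw [Finset.mem_filter] at hw'
          simp only [Finset.mem_insert, Finset.mem_singleton] at hw
          rcases hw with rfl | rfl
          · exact hYx w hw'.1 rfl
          · exact hYy w hw'.1 rfl
    have hex : ∀ m ∈ D, ∃ w ∈ Y, w m = q m := by
      intro m hm
      by_contra hcon
      push Not at hcon
      have hdc := double_count D Y q
      rw [Finset.sum_congr (s₁ := Y) rfl (g := fun _ => 1) (by
        intro w hw; rw [filter_eq_sdiff, hsd w hw])] at hdc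
      rw [← Finset.sum_erase_add _ _ hm, Finset.filter_false_of_mem hcon] at hdc
      have h5 := Finset.sum_le_sum (s := D.erase m) (g := fun _ => 1)
        (f := fun m => (Y.filter fun w => w m = q m).card)
        (fun n hn => hone n (Finset.mem_of_mem_erase hn))
      simp only [Finset.sum_const, smul_eq_mul, Finset.card_erase_of_mem hm, hD, h3,
        Finset.card_empty] at h5 hdc
      omega
    obtain ⟨wj, hwj, ej⟩ := hex j hjD
    obtain ⟨wk, hwk, ek⟩ := hex k hkD
    obtain ⟨wl, hwl, el⟩ := hex l hl
    obtain ⟨j1, j2⟩ := kj wj hwj ej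
    obtain ⟨k1, k2⟩ := kk wk hwk ek
    -- each of these words has exactly one original letter
    have uniq : ∀ w ∈ Y, ∀ m ∈ D, ∀ n ∈ D, w m = q m → w n = q n → m = n := by
      intro w hw m hm n hn e1 e2
      have := (Finset.card_le_one.1 (hsd w hw).le) m (by simp [hm, mem_supp, e1]) n
        (by simp [hn, mem_supp, e2])
      exact this
    have d1 := cx wl (hYm wl hwl).1 (hYx wl hwl)
    have d2 := cy wl (hYm wl hwl).1 (hYy wl hwl)
    have inD : ∀ {w w' : Fin d → S}, w ∈ C → w' ∈ C → w ≠ w' →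
        ∃ m, (m = i ∨ m = j ∨ m = k ∨ m = l) ∧ w m = c (w' m) ∧ w m ≠ q m ∧ w' m ≠ q m := by
      intro w w' hw hw' hww
      obtain ⟨m, hm, hm1, hm2⟩ := h.dich H hw hw' hww
      have hmD := hs w hw hm1
      rw [hDe] at hmD
      simp only [Finset.mem_insert, Finset.mem_singleton] at hmD
      exact ⟨m, hmD, hm, mem_supp.1 hm1, mem_supp.1 hm2⟩
    have hlj : wl ≠ wj := by
      rintro rfl
      exact hl2.2.1 (uniq _ hwl l hl j hjD el ej)
    have hlk : wl ≠ wk := by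
      rintro rfl
      exact hl2.2.2 (uniq _ hwl l hl k hkD el ek)
    obtain ⟨m, hm, m1, m2, m3⟩ := inD (hYm wl hwl).1 (hYm wj hwj).1 hlj
    obtain ⟨n, hn, n1, n2, n3⟩ := inD (hYm wl hwl).1 (hYm wk hwk).1 hlk
    have d3 : wl i = x i ∨ wl k = y k := by
      rcases hm with rfl | rfl | rfl | rfl
      · left; rw [m1, j1, H.inv]
      · exact absurd ej m3
      · right; rw [m1, j2, H.inv]
      · exact absurd el m2
    have d4 : wl i = c (x i) ∨ wl j = x j := by
      rcases hn with rfl | rfl | rfl | rfl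
      · left; rw [n1, k1]
      · right; rw [n1, k2, H.inv]
      · exact absurd ek n3
      · exact absurd el n2
    clear agree hone hex uniq inD out kj kk ki cx cy hsd hYx hYy hYm hcnt hs
    have hxi := H.ne (x i)
    have hxj := H.ne (x j)
    have hyk := H.ne (y k)
    have hyi : c (y i) = x i := hi.symm
    rw [hyi] at d2
    rcases d4 with d4 | d4
    · rcases d3 with d3 | d3
      · exact hxi (d4.symm.trans d3)
      · rcases d2 with d2 | d2
        · exact hxi (d4.symm.trans d2.1)
        · exact hyk (d2.1.symm.trans d3)
    · rcases d1 with d1 | d1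
      · rcases d3 with d3 | d3
        · exact hxi (d1.1.symm.trans d3)
        · rcases d2 with d2 | d2
          · exact hxi (d1.1.symm.trans d2.1)
          · exact hyk (d2.1.symm.trans d3)
      · exact hxj (d1.1.symm.trans d4)

lemma Cvr.seven_le (H : Compl c) {C : Finset (Fin d → S)} {q : Fin d → S} (h : Cvr c C q)
    {D : Finset (Fin d)} (hD : D.card = 4) (hs : ∀ p ∈ C, supp q p ⊆ D)
    (hcnt : ∀ i ∈ D, ∀ s, (C.filter fun p => p i = s).card + C.card ≤ 9) : 7 ≤ C.card := by
  by_contra hcon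
  have h5 := h.five_le H _ rfl
  obtain ⟨e1, e2⟩ := h.counts H hD hs
  by_cases h1 : ∃ p ∈ C, (supp q p).card = 1
  · obtain ⟨p, hp, hp1⟩ := h1
    obtain ⟨i, hi⟩ := Finset.card_eq_one.1 hp1
    have h6 := (h.peel H hp hi).five_le H _ rfl
    have h7 : C.erase p ⊆ C.filter fun r => r i = c (p i) := by
      intro r hr
      rw [Finset.mem_erase] at hr
      rw [Finset.mem_filter]
      exact ⟨hr.2, h.single H hp hr.2 hr.1 hi⟩
    have h8 := Finset.card_le_card h7
    have h9 := hcnt i (hs p hp (by rw [hi]; simp)) (c (p i))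
    rw [Finset.card_erase_of_mem hp] at h6 h8
    omega
  · have n1 : (C.filter fun p => (supp q p).card = 1).card = 0 := by
      rw [Finset.card_eq_zero, Finset.filter_eq_empty_iff]
      intro p hp hp1
      exact h1 ⟨p, hp, hp1⟩
    have n2 := h.n2_le H
    by_cases h3 : (C.filter fun p => (supp q p).card = 2).card = 3
    · obtain ⟨l, hl, hl'⟩ := h.case3 H hD h3
      have := hcnt l hl (q l)
      omega
    · refine h.case2 H hD hs (by omega) (by omega) ?_
      intro i hi
      have := hcnt i hi (q i)
      omega

end PolyboxPaper

namespace PolyboxPaper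
set_option linter.unusedSectionVars false
variable {S : Type} [Fintype S] [DecidableEq S] {d : ℕ} {c : S → S}

/-! ### frames -/

/-- the simple tiling code in the directions `E` through the word `v` -/
def frame (c : S → S) (E : Finset (Fin d)) (v : Fin d → S) : Finset (Fin d → S) :=
  Fintype.piFinset fun i => if i ∈ E then {v i, c (v i)} else {v i}

lemma mem_frame {E : Finset (Fin d)} {v w : Fin d → S} :
    w ∈ frame c E v ↔ (∀ i ∈ E, w i = v i ∨ w i = c (v i)) ∧ ∀ i, i ∉ E → w i = v i := by
  rw [frame, Fintype.mem_piFinset, ← forall_and]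
  refine forall_congr' fun i => ?_
  by_cases h : i ∈ E <;> simp [h]

lemma self_mem_frame {E : Finset (Fin d)} {v : Fin d → S} : v ∈ frame c E v := by
  rw [mem_frame]; exact ⟨fun _ _ => Or.inl rfl, fun _ _ => rfl⟩

lemma card_frame (H : Compl c) (E : Finset (Fin d)) (v : Fin d → S) :
    (frame c E v).card = 2 ^ E.card := by
  rw [frame, Fintype.card_piFinset]
  have : ∀ i, (if i ∈ E then ({v i, c (v i)} : Finset S) else {v i}).card = if i ∈ E then 2 else 1 := by
    intro i
    split_ifs
    · exact Finset.card_pair (H.ne _).symm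
    · simp
  simp only [this]
  rw [Finset.prod_ite]; simp

lemma frame_dich (H : Compl c) {E : Finset (Fin d)} {v w w' : Fin d → S} (h : w ∈ frame c E v)
    (h' : w' ∈ frame c E v) (hne : w ≠ w') : ∃ i ∈ E, w i = c (w' i) := by
  rw [mem_frame] at h h'
  obtain ⟨i, hi⟩ := Function.ne_iff.1 hne
  have hiE : i ∈ E := by
    by_contra hiE
    exact hi (by rw [h.2 i hiE, h'.2 i hiE])
  refine ⟨i, hiE, ?_⟩
  rcases h.1 i hiE with e | e <;> rcases h'.1 i hiE with e' | e'
  · exact absurd (e.trans e'.symm) hi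
  · rw [e, e', H.inv]
  · rw [e, e']
  · exact absurd (e.trans e'.symm) hi

lemma isCode_frame (H : Compl c) (E : Finset (Fin d)) (v : Fin d → S) : IsCode c (frame c E v) := by
  intro w hw w' hw' hne
  obtain ⟨i, -, hi⟩ := frame_dich H hw hw' hne
  exact ⟨i, hi⟩

lemma dich_in (H : Compl c) {P : Finset (Fin d → S)} (hP : IsCode c P) {E : Finset (Fin d)}
    (hc : ∀ i, i ∉ E → ∃ o, ∀ p ∈ P, p i = o) {p q : Fin d → S} (hp : p ∈ P) (hq : q ∈ P)
    (hne : p ≠ q) : ∃ i ∈ E, p i = c (q i) := by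
  obtain ⟨i, hi⟩ := hP p hp q hq hne
  refine ⟨i, ?_, hi⟩
  by_contra hiE
  obtain ⟨o, ho⟩ := hc i hiE
  rw [ho p hp, ho q hq] at hi
  exact H.ne _ hi.symm

/-- complete codes with the same constant letters are equivalent -/
lemma tile_eqv (H : Compl c) {A B : Finset (Fin d → S)} (hA : IsCode c A) (hB : IsCode c B)
    {E : Finset (Fin d)} (o : Fin d → S) (hAc : A.card = 2 ^ E.card) (hBc : B.card = 2 ^ E.card)
    (hAo : ∀ a ∈ A, ∀ i, i ∉ E → a i = o i) (hBo : ∀ a ∈ B, ∀ i, i ∉ E → a i = o i) :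
    Eqv c A B := by
  have key : ∀ {A B : Finset (Fin d → S)}, IsCode c B → B.card = 2 ^ E.card →
      (∀ a ∈ A, ∀ i, i ∉ E → a i = o i) → (∀ a ∈ B, ∀ i, i ∉ E → a i = o i) →
      ∀ x : Fin d → Pt c, Cov x A → Cov x B := by
    rintro A B hB hBc hAo hBo x ⟨a, ha, hx⟩
    obtain ⟨b, hb, hxb⟩ := (pack H E B fun p hp q hq hne =>
      dich_in H hB (fun i hi => ⟨o i, fun p hp => hBo p hp i hi⟩) hp hq hne).2 hBc x
    refine ⟨b, hb, fun i => ?_⟩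
    by_cases hi : i ∈ E
    · exact hxb i hi
    · rw [hBo b hb i hi, ← hAo a ha i hi]; exact hx i
  exact fun x => ⟨key hB hBc hAo hBo x, key hA hAc hBo hAo x⟩

lemma frame_step (H : Compl c) (E : Finset (Fin d)) (v : Fin d → S) {i : Fin d} (hi : i ∈ E) (t : S) :
    GC c (frame c E v) (frame c E (Function.update v i t)) := by
  have e : ∀ t, frame c E (Function.update v i t)
      = upd i t (frame c (E.erase i) v) ∪ upd i (c t) (frame c (E.erase i) v) := by
    intro t
    ext z
    rw [Finset.mem_union, mem_upd, mem_upd, mem_frame]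
    constructor
    · rintro ⟨h1, h2⟩
      have hz : Function.update z i (v i) ∈ frame c (E.erase i) v := by
        rw [mem_frame]
        constructor
        · intro j hj
          rw [Finset.mem_erase] at hj
          have := h1 j hj.2
          simpa [hj.1] using this
        · intro j hj
          rw [Finset.mem_erase, not_and] at hj
          by_cases hji : j = i
          · subst hji; simp
          · have := h2 j (hj hji)
            simpa [hji] using this
      have h3 := h1 i hi
      rw [Function.update_self] at h3
      rcases h3 with h3 | h3
      · left; exact ⟨_, hz, by rw [Function.update_idem, ← h3, Function.update_eq_self]⟩
      · right; exact ⟨_, hz, by rw [Function.update_idem, ← h3, Function.update_eq_self]⟩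
    · intro h
      have key : ∀ u, (u = t ∨ u = c t) → ∀ w ∈ frame c (E.erase i) v, Function.update w i u = z →
          (∀ i_1 ∈ E, z i_1 = Function.update v i t i_1 ∨ z i_1 = c (Function.update v i t i_1)) ∧
          ∀ i_1 ∉ E, z i_1 = Function.update v i t i_1 := by
        rintro u hu w hw rfl
        rw [mem_frame] at hw
        constructor
        · intro j hj
          by_cases hji : j = i
          · subst hji; simpa using hu
          · simpa [hji] using hw.1 j (Finset.mem_erase.2 ⟨hji, hj⟩)
        · intro j hj
          have hji : j ≠ i := by rintro rfl; exact hj hi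
          simpa [hji] using hw.2 j (fun h' => hj (Finset.mem_of_mem_erase h'))
      rcases h with ⟨w, hw, h⟩ | ⟨w, hw, h⟩
      · exact key t (Or.inl rfl) w hw h
      · exact key (c t) (Or.inr rfl) w hw h
  have hB : ∀ b ∈ frame c (E.erase i) v, b i = v i := by
    intro b hb
    exact (mem_frame.1 hb).2 i (by simp)
  have e0 : frame c E v = frame c (E.erase i) v ∪ upd i (c (v i)) (frame c (E.erase i) v) := by
    have := e (v i)
    rw [Function.update_eq_self, upd_self hB] at this
    exact this
  have h1 := flip_lemma H (i := i) t (frame c (E.erase i) v) hB (by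
    rw [← e0]; exact isCode_frame H E v)
  rw [← e0, ← e t] at h1
  exact h1

lemma frame_gc (H : Compl c) (E : Finset (Fin d)) {v w : Fin d → S} (h : ∀ i, i ∉ E → v i = w i) :
    GC c (frame c E v) (frame c E w) := by
  have key : ∀ T : Finset (Fin d), GC c (frame c E v) (frame c E (T.piecewise w v)) := by
    intro T
    induction T using Finset.induction_on with
    | empty => rw [Finset.piecewise_empty]; exact Relation.ReflTransGen.refl
    | insert i T hi ih =>
      rw [Finset.piecewise_insert]
      by_cases hiE : i ∈ E
      · exact ih.trans (frame_step H E _ hiE _)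
      · have : Function.update (T.piecewise w v) i (w i) = T.piecewise w v := by
          rw [← h i hiE, Function.update_eq_self_iff]
          simp [hi]
        rw [this]; exact ih
  have := key Finset.univ
  rwa [Finset.piecewise_univ] at this

lemma exists_min {α : Type*} (p : α → Prop) (f : α → ℕ) (h : ∃ a, p a) :
    ∃ a, p a ∧ ∀ b, p b → f a ≤ f b := by
  classical
  have h' : ∃ n, ∃ a, p a ∧ f a = n := by
    obtain ⟨a, ha⟩ := h
    exact ⟨_, a, ha, rfl⟩
  obtain ⟨a, ha, hfa⟩ := Nat.find_spec h'
  refine ⟨a, ha, fun b hb => ?_⟩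
  rw [hfa]
  exact Nat.find_min' h' ⟨b, hb, rfl⟩

lemma pair_count (H : Compl c) {P : Finset (Fin d → S)} (hP : IsCode c P) {E : Finset (Fin d)}
    (hc : ∀ i, i ∉ E → ∃ o, ∀ p ∈ P, p i = o) {p : Fin d → S} (hp : p ∈ P) :
    P.card ≤ 1 + ∑ i ∈ E, (P.filter fun w => w i = c (p i)).card := by
  have h1 : P.erase p ⊆ E.biUnion fun i => P.filter fun w => w i = c (p i) := by
    intro w hw
    rw [Finset.mem_erase] at hw
    obtain ⟨i, hi, hi'⟩ := dich_in H hP hc hw.2 hp hw.1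
    rw [Finset.mem_biUnion]
    exact ⟨i, hi, by simp [hw.2, hi']⟩
  have h2 := (Finset.card_le_card h1).trans Finset.card_biUnion_le
  rw [Finset.card_erase_of_mem hp] at h2
  omega

lemma parity (H : Compl c) {P : Finset (Fin d → S)} (hP : IsCode c P) {E : Finset (Fin d)}
    (hc : ∀ i, i ∉ E → ∃ o, ∀ p ∈ P, p i = o) (hE : E.Nonempty) (hcard : P.card = 2 * E.card + 1)
    (h2 : ∀ i ∈ E, ∀ s, (P.filter fun w => w i = s).card ≤ 2) : False := by
  have key : ∀ p ∈ P, ∀ i ∈ E, (P.filter fun w => w i = c (p i)).card = 2 := by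
    intro p hp i hi
    by_contra hne
    have h3 := pair_count H hP hc hp
    have h4 := Finset.sum_lt_sum (s := E) (g := fun _ => 2)
      (f := fun i => (P.filter fun w => w i = c (p i)).card) (fun i hi => h2 i hi _)
      ⟨i, hi, lt_of_le_of_ne (h2 i hi _) hne⟩
    simp only [Finset.sum_const, smul_eq_mul] at h4
    omega
  obtain ⟨i, hi⟩ := hE
  have key2 : ∀ s ∈ P.image (fun w => w i), (P.filter fun w => w i = s).card = 2 := by
    intro s hs
    rw [Finset.mem_image] at hs
    obtain ⟨p, hp, rfl⟩ := hs
    have h3 := key p hp i hi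
    have h4 : (P.filter fun w => w i = c (p i)).Nonempty := by
      rw [← Finset.card_pos]; omega
    obtain ⟨r, hr⟩ := h4
    rw [Finset.mem_filter] at hr
    have h5 := key r hr.1 i hi
    rw [hr.2, H.inv] at h5
    exact h5
  have h3 := Finset.card_eq_sum_card_image (fun w : Fin d → S => w i) P
  rw [Finset.sum_congr rfl key2] at h3
  simp only [Finset.sum_const, smul_eq_mul] at h3
  omega

end PolyboxPaper

namespace PolyboxPaper
set_option linter.unusedSectionVars false
variable {S : Type} [Fintype S] [DecidableEq S] {d : ℕ} {c : S → S}

/-! ### small codes depending on at most four coordinates -/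

/-- the code is constant in all directions outside `D` -/
def ConstOut (D : Finset (Fin d)) (Q : Finset (Fin d → S)) : Prop :=
  ∀ i, i ∉ D → ∃ o, ∀ q ∈ Q, q i = o

lemma ConstOut.of_eqv (H : Compl c) {D : Finset (Fin d)} {P Q : Finset (Fin d → S)}
    (hQ : ConstOut D Q) (h : Eqv c P Q) : ConstOut D P := by
  intro i hi
  obtain ⟨o, ho⟩ := hQ i hi
  exact ⟨o, const_of_eqv H h ho⟩

lemma ConstOut.mono {D : Finset (Fin d)} {P Q : Finset (Fin d → S)}
    (hQ : ConstOut D Q) (h : P ⊆ Q) : ConstOut D P := by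
  intro i hi
  obtain ⟨o, ho⟩ := hQ i hi
  exact ⟨o, fun p hp => ho p (h hp)⟩

/-- the letters of `Q` at position `i`, with their complements -/
def letters (c : S → S) (Q : Finset (Fin d → S)) (i : Fin d) : Finset S :=
  Q.image (fun q => q i) ∪ Q.image (fun q => c (q i))

lemma mem_letters {Q : Finset (Fin d → S)} {i : Fin d} {s : S} :
    s ∈ letters c Q i ↔ ∃ q ∈ Q, q i = s ∨ c (q i) = s := by
  simp only [letters, Finset.mem_union, Finset.mem_image]
  constructor
  · rintro (⟨q, hq, h⟩ | ⟨q, hq, h⟩)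
    · exact ⟨q, hq, Or.inl h⟩
    · exact ⟨q, hq, Or.inr h⟩
  · rintro ⟨q, hq, h | h⟩
    · exact Or.inl ⟨q, hq, h⟩
    · exact Or.inr ⟨q, hq, h⟩

lemma letters_closed (H : Compl c) (Q : Finset (Fin d → S)) (i : Fin d) :
    ∀ s ∈ letters c Q i, c s ∈ letters c Q i := by
  intro s hs
  rw [mem_letters] at hs ⊢
  obtain ⟨q, hq, h | h⟩ := hs
  · exact ⟨q, hq, Or.inr (by rw [h])⟩
  · exact ⟨q, hq, Or.inl (by rw [← h, H.inv])⟩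

lemma bad_eq_zero {G : Fin d → Finset S} {P : Finset (Fin d → S)} :
    bad G P = 0 ↔ ∀ p ∈ P, ∀ i, p i ∈ G i := by
  unfold bad badw
  rw [Finset.sum_eq_zero_iff]
  simp [Finset.filter_eq_empty_iff]

/-- turning a twin pair towards the word `q` -/
lemma turn_pair (H : Compl c) {P : Finset (Fin d → S)} {G : Fin d → Finset S}
    (hG : ∀ i, ∀ s ∈ G i, c s ∈ G i) (hPG : ∀ p ∈ P, ∀ i, p i ∈ G i) {q : Fin d → S}
    (hq : ∀ i, q i ∈ G i) {v w : Fin d → S} (hv : v ∈ P.filter fun p => ¬ Dich c p q)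
    (hw : w ∈ P.filter fun p => ¬ Dich c p q) {i : Fin d} (ht : TwinPair c v w i) :
    ∃ P', GC c P P' ∧ (∀ p ∈ P', ∀ i, p i ∈ G i) ∧
      (P'.filter fun p => ¬ Dich c p q).card < (P.filter fun p => ¬ Dich c p q).card := by
  have hvP := (Finset.mem_filter.1 hv).1
  have hwP := (Finset.mem_filter.1 hw).1
  have e2 : Function.update v i (c (v i)) = w := by
    funext j
    by_cases hj : j = i
    · subst hj; simp [ht.1, H.inv]
    · simp [hj, ht.2 j hj]
  have hpair : pairW c v i (v i) = {v, w} := by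
    rw [pairW, e2, Function.update_eq_self]
  have hsub : pairW c v i (v i) ⊆ P := by
    rw [hpair]
    intro z hz
    simp only [Finset.mem_insert, Finset.mem_singleton] at hz
    rcases hz with rfl | rfl <;> assumption
  have hvw : v ≠ w := by
    rintro rfl
    exact H.ne _ ht.1.symm
  refine ⟨_, Relation.ReflTransGen.single (gcstep_mk H (q i) hsub), ?_, ?_⟩
  · intro p hp j
    rw [Finset.mem_union, mem_pairW] at hp
    rcases hp with hp | rfl | rfl
    · exact hPG p (Finset.mem_sdiff.1 hp).1 j
    · by_cases hj : j = i
      · subst hj; simpa using hq j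
      · simpa [hj] using hPG v hvP j
    · by_cases hj : j = i
      · subst hj; simpa using hG j _ (hq j)
      · simpa [hj] using hPG v hvP j
  · have h1 : ((P \ pairW c v i (v i) ∪ pairW c v i (q i)).filter fun p => ¬ Dich c p q)
        ⊆ insert (Function.update v i (q i)) ((P.filter fun p => ¬ Dich c p q) \ {v, w}) := by
      intro z hz
      rw [Finset.mem_filter, Finset.mem_union, mem_pairW, hpair, Finset.mem_sdiff] at hz
      rw [Finset.mem_insert, Finset.mem_sdiff, Finset.mem_filter]
      rcases hz with ⟨h | h | h, h'⟩
      · exact Or.inr ⟨⟨h.1, h'⟩, h.2⟩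
      · exact Or.inl h
      · exfalso
        apply h'
        rw [h]
        exact ⟨i, by simp⟩
    have h2 := (Finset.card_le_card h1).trans (Finset.card_insert_le _ _)
    have h3 : ({v, w} : Finset (Fin d → S)) ⊆ P.filter fun p => ¬ Dich c p q := by
      intro z hz
      simp only [Finset.mem_insert, Finset.mem_singleton] at hz
      rcases hz with rfl | rfl <;> assumption
    rw [Finset.card_sdiff_of_subset h3, Finset.card_pair hvw] at h2
    have h4 := Finset.card_le_card h3
    rw [Finset.card_pair hvw] at h4
    omega

theorem small_gc (H : Compl c) (D : Finset (Fin d)) (hD : D.card ≤ 4) : ∀ m ≤ 9,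
    ∀ P Q : Finset (Fin d → S), IsCode c P → IsCode c Q → P.card = m → ConstOut D Q → Eqv c P Q →
    GC c P Q := by
  classical
  intro m
  induction m using Nat.strong_induction_on with
  | _ m IH0 =>
  intro hm9 P Q hP hQ hPm hQD hPQ
  have IH : ∀ P Q : Finset (Fin d → S), IsCode c P → IsCode c Q → P.card < m → ConstOut D Q →
      Eqv c P Q → GC c P Q := fun P Q hP hQ hlt =>
    IH0 P.card hlt (by omega) P Q hP hQ rfl
  clear IH0
  by_contra hcon
  have hQm : Q.card = m := by rw [← card_eq_of_eqv H hP hQ hPQ, hPm]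
  have hm0 : 0 < m := by
    rcases Nat.eq_zero_or_pos m with h | h
    · exfalso
      apply hcon
      rw [h, Finset.card_eq_zero] at hPm hQm
      rw [hPm, hQm]; exact Relation.ReflTransGen.refl
    · exact h
  -- facts on the class of P
  have cls : ∀ P2, GC c P P2 → IsCode c P2 ∧ Eqv c P2 Q ∧ P2.card = m := by
    intro P2 h2
    have a1 := h2.isCode H hP
    have a2 := (h2.eqv H).symm.trans hPQ
    exact ⟨a1, a2, by rw [card_eq_of_eqv H a1 hQ a2, hQm]⟩
  have hcommon : ∀ P2, GC c P P2 → ∀ q ∈ Q, q ∉ P2 := by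
    intro P2 h2 q hq hq2
    obtain ⟨a1, a2, a3⟩ := cls P2 h2
    apply hcon
    refine h2.trans (gc_of_common H a1 hq2 hq (IH _ _ (a1.mono Finset.sdiff_subset)
      (hQ.mono Finset.sdiff_subset) ?_ (hQD.mono Finset.sdiff_subset)
      (eqv_erase a1 hQ a2 (by simpa using hq2) (by simpa using hq))))
    rw [Finset.card_sdiff_of_subset (by simpa using hq2), Finset.card_singleton]
    omega
  have hQne : Q.Nonempty := by rw [← Finset.card_pos]; omega
  set G := letters c Q with hGdef
  have hG : ∀ i, ∀ s ∈ G i, c s ∈ G i := letters_closed H Q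
  have hQG : ∀ q ∈ Q, ∀ i, q i ∈ G i := fun q hq i => mem_letters.2 ⟨q, hq, Or.inl rfl⟩
  -- step 1
  obtain ⟨P1, hP1, hmin1⟩ := exists_min (fun P1 => GC c P P1) (bad G) ⟨P, Relation.ReflTransGen.refl⟩
  have hbad1 : ∀ p ∈ P1, ∀ i, p i ∈ G i := by
    intro p hp i
    by_contra hpi
    obtain ⟨a1, a2, a3⟩ := cls P1 hP1
    have hP1D : ConstOut D P1 := hQD.of_eqv H a2
    obtain ⟨P2, hP2, hlt⟩ := reduce H a1 hQ a2 G hG hQG (i := i)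
      (by obtain ⟨q, hq⟩ := hQne; exact ⟨_, hQG q hq i⟩) hp hpi (by
        intro u hu B hB hE hBu hle _
        exact IH _ _ (a1.mono (Finset.filter_subset _ _)) hB (by omega)
          ((hP1D.mono (Finset.filter_subset _ _)).of_eqv H hE.symm) hE)
    have := hmin1 P2 (hP1.trans hP2)
    omega
  -- step 2
  obtain ⟨⟨P2, q⟩, ⟨hP2, hP2G, hq⟩, hmin⟩ := exists_min
    (fun a : Finset (Fin d → S) × (Fin d → S) => GC c P a.1 ∧ (∀ p ∈ a.1, ∀ i, p i ∈ G i) ∧ a.2 ∈ Q)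
    (fun a => (a.1.filter fun p => ¬ Dich c p a.2).card)
    (by obtain ⟨q, hq⟩ := hQne; exact ⟨(P1, q), hP1, hbad1, hq⟩)
  simp only at hP2 hP2G hq hmin
  obtain ⟨hP2c, hP2Q, hP2m⟩ := cls P2 hP2
  set C := P2.filter fun p => ¬ Dich c p q with hC
  have hcvr : Cvr c C q := by
    refine ⟨hP2c.mono (Finset.filter_subset _ _), fun p hp => (Finset.mem_filter.1 hp).2, ?_, ?_, ?_⟩
    · intro x hx
      obtain ⟨p, hp, hxp⟩ := (hP2Q x).2 ⟨q, hq, hx⟩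
      exact ⟨p, Finset.mem_filter.2 ⟨hp, fun h' => not_mem_both h' hxp hx⟩, hxp⟩
    · intro v hv w hw i ht
      obtain ⟨P3, b1, b2, b3⟩ := turn_pair H hG hP2G (hQG q hq) hv hw ht
      have := hmin (P3, q) ⟨hP2.trans b1, b2, hq⟩
      simp only at this
      rw [← hC] at b3
      omega
    · intro h'
      exact hcommon P2 hP2 q hq (Finset.mem_filter.1 h').1
  -- nonconstant directions
  set D0 := D.filter fun i => ¬ ∃ o, ∀ q ∈ Q, q i = o with hD0
  have hQD0 : ConstOut D0 Q := by
    intro i hi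
    by_cases hiD : i ∈ D
    · by_contra h'
      exact hi (Finset.mem_filter.2 ⟨hiD, h'⟩)
    · exact hQD i hiD
  have hPD0 : ConstOut D0 P2 := hQD0.of_eqv H hP2Q
  have hD0c : D0.card ≤ 4 := (Finset.card_le_card (Finset.filter_subset _ _)).trans hD
  have hCm : C.card ≤ m := by rw [← hP2m]; exact Finset.card_le_card (Finset.filter_subset _ _)
  -- step 3
  have hcnt : ∀ i ∈ D0, ∀ s, (P2.filter fun p => p i = s).card + C.card ≤ m := by
    intro i hi s
    by_cases hs : ∃ p ∈ P2, p i = s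
    · obtain ⟨p0, hp0, hp0s⟩ := hs
      have hex : ∃ q' ∈ Q, q' i = c s := by
        by_contra hno
        push Not at hno
        obtain ⟨x1, x2⟩ := exchange H hP2c hQ hP2Q i s hno
        have hq' : ∃ q' ∈ Q, q' i = s := by
          have := hP2G p0 hp0 i
          rw [hp0s, hGdef, mem_letters] at this
          obtain ⟨q', hq', h' | h'⟩ := this
          · exact ⟨q', hq', h'⟩
          · exact absurd (by rw [← h', H.inv]) (hno q' hq')
        obtain ⟨q', hq', hq's⟩ := hq'
        have hlt : (P2.filter fun w => w i = s).card < m := by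
          rw [← hP2m]
          apply Finset.card_lt_card
          rw [Finset.filter_ssubset]
          by_contra hall
          push Not at hall
          exact (Finset.mem_filter.1 hi).2 ⟨s, const_of_eqv H hP2Q.symm hall⟩
        have hgc := IH _ _ (hP2c.mono (Finset.filter_subset (fun w => w i = s) P2)) x2 hlt
          (((hQD.of_eqv H hP2Q).mono (Finset.filter_subset _ _)).of_eqv H x1.symm) x1
        have e1 : P2 = (P2.filter fun w => w i = s) ∪ (P2.filter fun w => ¬ w i = s) :=
          (Finset.filter_union_filter_not_eq _ _).symm
        have hg2 := gc_union H (R := P2.filter fun w => ¬ w i = s) hgc (by rw [← e1]; exact hP2c)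
          (Finset.disjoint_filter_filter_not _ _ _)
        rw [← e1] at hg2
        refine hcommon _ (hP2.trans hg2) q' hq' ?_
        apply Finset.mem_union_left
        apply Finset.mem_union_left
        exact Finset.mem_filter.2 ⟨hq', hq's⟩
      obtain ⟨q', hq', hq's⟩ := hex
      have h1 := hmin (P2, q') ⟨hP2, hP2G, hq'⟩
      simp only at h1
      have h2 : Disjoint (P2.filter fun p => p i = s) (P2.filter fun p => ¬ Dich c p q') := by
        rw [Finset.disjoint_left]
        intro z hz hz'
        rw [Finset.mem_filter] at hz hz'
        exact hz'.2 ⟨i, by rw [hz.2, hq's, H.inv]⟩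
      have h3 := Finset.card_union_of_disjoint h2
      have h4 := Finset.card_le_card (Finset.union_subset
        (Finset.filter_subset (fun p => p i = s) P2)
        (Finset.filter_subset (fun p => ¬ Dich c p q') P2))
      omega
    · have : (P2.filter fun p => p i = s) = ∅ := by
        rw [Finset.filter_eq_empty_iff]
        intro p hp hps
        exact hs ⟨p, hp, hps⟩
      rw [this, Finset.card_empty]
      omega
  have h5 := hcvr.five_le H _ rfl
  have hP2ne : P2.Nonempty := by rw [← Finset.card_pos]; omega
  obtain ⟨p0, hp0⟩ := hP2ne
  have hpc : m ≤ 1 + D0.card * (m - C.card) := by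
    have h6 := pair_count H hP2c hPD0 hp0
    have h7 := Finset.sum_le_sum (s := D0) (g := fun _ => m - C.card)
      (f := fun i => (P2.filter fun w => w i = c (p0 i)).card) (fun i hi => by
        have := hcnt i hi (c (p0 i))
        omega)
    simp only [Finset.sum_const, smul_eq_mul] at h7
    omega
  have hsupp : ∀ p ∈ C, supp q p ⊆ D0 := by
    intro p hp i hi
    by_contra hiD
    obtain ⟨o, ho⟩ := hQD0 i hiD
    have h6 := const_of_eqv H hP2Q ho p (Finset.mem_filter.1 hp).1
    rw [mem_supp, h6, ho q hq] at hi
    exact hi rfl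
  rcases Nat.lt_or_ge D0.card 4 with h3 | h4
  · have hD3 : D0.card = 3 ∧ (m = 7 ∧ C.card = 5 ∨ m = 8) := by
      have hpk := (pack H D0 P2 (fun p hp r hr hne => dich_in H hP2c hPD0 hp hr hne)).1
      rw [hP2m] at hpk
      interval_cases h : D0.card <;> norm_num at hpk <;> omega
    obtain ⟨hD3, ⟨hm7, hC5⟩ | hm8⟩ := hD3
    · refine parity H hP2c hPD0 (by rw [← Finset.card_pos]; omega) (by omega) ?_
      intro i hi s
      have := hcnt i hi s
      omega
    · -- tilings
      obtain ⟨q0, hq0⟩ := hQne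
      have tile : ∀ A : Finset (Fin d → S), IsCode c A → A.card = 8 → ConstOut D0 A → ∀ v ∈ A,
          GC c A (frame c D0 v) := by
        intro A hA hA8 hAD v hv
        have hfr : ∀ a ∈ frame c D0 v, ∀ i, i ∉ D0 → a i = v i := fun a ha i hi =>
          (mem_frame.1 ha).2 i hi
        have he : Eqv c A (frame c D0 v) := by
          refine tile_eqv H hA (isCode_frame H D0 v) v (E := D0) (by rw [hA8, hD3]; rfl)
            (card_frame H D0 v) ?_ hfr
          intro a ha i hi
          obtain ⟨o, ho⟩ := hAD i hi
          rw [ho a ha, ho v hv]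
        refine gc_of_common H hA hv self_mem_frame (IH _ _ (hA.mono Finset.sdiff_subset)
          ((isCode_frame H D0 v).mono Finset.sdiff_subset) ?_ ?_
          (eqv_erase hA (isCode_frame H D0 v) he (by simpa using hv)
            (by simpa using self_mem_frame)))
        · rw [Finset.card_sdiff_of_subset (by simpa using hv), Finset.card_singleton]
          omega
        · intro i hi
          refine ⟨v i, fun a ha => hfr a (Finset.mem_sdiff.1 ha).1 i ?_⟩
          exact fun h' => hi (Finset.mem_filter.1 h').1
      have g1 := tile P2 hP2c (by omega) hPD0 p0 hp0
      have g2 := tile Q hQ (by omega) hQD0 q0 hq0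
      have g3 : GC c (frame c D0 p0) (frame c D0 q0) := by
        apply frame_gc H
        intro i hi
        obtain ⟨o, ho⟩ := hQD0 i hi
        rw [ho q0 hq0, const_of_eqv H hP2Q ho p0 hp0]
      exact hcon (hP2.trans (g1.trans (g3.trans (g2.symm H hQ))))
  · have hD4 : D0.card = 4 := by omega
    have h7 := hcvr.seven_le H hD4 hsupp (by
      intro i hi s
      have h8 := hcnt i hi s
      have h9 : (C.filter fun p => p i = s).card ≤ (P2.filter fun p => p i = s).card :=
        Finset.card_le_card (Finset.filter_subset_filter _ (Finset.filter_subset _ _))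
      omega)
    rw [hD4] at hpc
    refine parity H hP2c hPD0 (by rw [← Finset.card_pos]; omega) (by omega) ?_
    intro i hi s
    have := hcnt i hi s
    omega

end PolyboxPaper

namespace PolyboxPaper

set_option linter.unusedSectionVars false

variable {S : Type} [Fintype S] [DecidableEq S] {d : ℕ} {c : S → S}

lemma eqv_split {V U : Finset (Fin d → S)} (h : Eqv c V U) {j : Fin d} {t : S}
    (H : Compl c) (hV : ∀ v ∈ V, v j = t ∨ v j = c t) (hU : ∀ v ∈ U, v j = t ∨ v j = c t) :
    Eqv c (V.filter fun w => w j = t) (U.filter fun w => w j = t) ∧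
    Eqv c (V.filter fun w => ¬ w j = t) (U.filter fun w => ¬ w j = t) := by
  have key : ∀ {A B : Finset (Fin d → S)}, (∀ x : Fin d → Pt c, Cov x A → Cov x B) →
      (∀ v ∈ A, v j = t ∨ v j = c t) → (∀ v ∈ B, v j = t ∨ v j = c t) → ∀ x : Fin d → Pt c,
      (Cov x (A.filter fun w => w j = t) → Cov x (B.filter fun w => w j = t)) ∧
      (Cov x (A.filter fun w => ¬ w j = t) → Cov x (B.filter fun w => ¬ w j = t)) := by
    intro A B hAB hA hB x
    constructor
    · rintro ⟨a, ha, hx⟩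
      rw [Finset.mem_filter] at ha
      obtain ⟨b, hb, hxb⟩ := hAB x ⟨a, ha.1, hx⟩
      refine ⟨b, Finset.mem_filter.2 ⟨hb, ?_⟩, hxb⟩
      rcases hB b hb with h1 | h1
      · exact h1
      · have h2 := hx j
        have h3 := hxb j
        rw [ha.2] at h2
        rw [h1, (x j).2, h2] at h3
        simp at h3
    · rintro ⟨a, ha, hx⟩
      rw [Finset.mem_filter] at ha
      obtain ⟨b, hb, hxb⟩ := hAB x ⟨a, ha.1, hx⟩
      refine ⟨b, Finset.mem_filter.2 ⟨hb, ?_⟩, hxb⟩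
      intro h1
      have h2 := hx j
      have h3 := hxb j
      rw [(hA a ha.1).resolve_left ha.2, (x j).2] at h2
      rw [h1] at h3
      rw [h3] at h2
      simp at h2
  exact ⟨fun x => ⟨(key (fun x => (h x).1) hV hU x).1, (key (fun x => (h x).2) hU hV x).1⟩,
    fun x => ⟨(key (fun x => (h x).1) hV hU x).2, (key (fun x => (h x).2) hU hV x).2⟩⟩

/-- two disjoint halves may be treated one after another -/
lemma gc_halves (H : Compl c) {A B A' B' : Finset (Fin d → S)} (h1 : GC c A A') (h2 : GC c B B')
    (hc : IsCode c (A ∪ B)) (hd : Disjoint A B) : GC c (A ∪ B) (A' ∪ B') := by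
  obtain ⟨g, hc2, hd2⟩ := gc_union_aux H h1 hc hd
  refine g.trans ?_
  rw [Finset.union_comm A' B, Finset.union_comm A' B']
  exact gc_union H h2 (by rwa [Finset.union_comm]) hd2.symm

theorem frame_part_gc (H : Compl c) : ∀ n ≤ 5, ∀ D : Finset (Fin d), D.card = n → ∀ s : Fin d → S,
    ∀ V U : Finset (Fin d → S), IsCode c V → IsCode c U → Eqv c V U → U ⊆ frame c D s →
    GC c V U := by
  classical
  intro n
  induction n using Nat.strong_induction_on with
  | _ n IH =>
  intro hn D hD
  have proper : ∀ s : Fin d → S, ∀ V U : Finset (Fin d → S), IsCode c V → IsCode c U →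
      Eqv c V U → U ⊆ frame c D s → (∃ v', v' ∈ frame c D s ∧ v' ∉ U) → GC c V U := by
    rintro s V U hV hU hVU hUs ⟨v', hv's, hv'U⟩
    have hUcard : U.card < 2 ^ D.card := by
      rw [← card_frame H D s]
      exact Finset.card_lt_card (Finset.ssubset_iff_of_subset hUs |>.2 ⟨v', hv's, hv'U⟩)
    let G : Fin d → Finset S := fun i => {s i, c (s i)}
    have memG : ∀ i t, t ∈ G i ↔ t = s i ∨ t = c (s i) := by intro i t; simp [G]
    have hG : ∀ i, ∀ t ∈ G i, c t ∈ G i := by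
      intro i t ht
      rw [memG] at *
      rcases ht with rfl | rfl
      · exact Or.inr rfl
      · exact Or.inl (H.inv _)
    have hfG : ∀ w ∈ frame c D s, ∀ i, w i ∈ G i := by
      intro w hw i
      rw [mem_frame] at hw
      rw [memG]
      by_cases hi : i ∈ D
      · exact hw.1 i hi
      · exact Or.inl (hw.2 i hi)
    have hUG : ∀ q ∈ U, ∀ i, q i ∈ G i := fun q hq => hfG q (hUs hq)
    have hUo : ∀ i, i ∉ D → ∀ q ∈ U, q i = s i := fun i hi q hq => (mem_frame.1 (hUs hq)).2 i hi
    obtain ⟨V1, hV1, hmin⟩ := exists_min (fun P1 => GC c V P1) (bad G)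
      ⟨V, Relation.ReflTransGen.refl⟩
    have a1 := hV1.isCode H hV
    have a2 := (hV1.eqv H).symm.trans hVU
    have a3 := card_eq_of_eqv H a1 hU a2
    have hV1o : ∀ i, i ∉ D → ∀ q ∈ V1, q i = s i := fun i hi => const_of_eqv H a2 (hUo i hi)
    refine hV1.trans ?_
    by_cases hgood : ∃ j ∈ D, ∀ p ∈ V1, p j ∈ G j
    · obtain ⟨j, hj, hjG⟩ := hgood
      obtain ⟨e1, e2⟩ := eqv_split a2 (j := j) (t := s j) H (fun v hv => (memG _ _).1 (hjG v hv))
        (fun v hv => (memG _ _).1 (hUG v hv j))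
      have hDj : (D.erase j).card < n := by
        rw [Finset.card_erase_of_mem hj]
        have := Finset.card_pos.2 ⟨j, hj⟩
        omega
      have g1 := IH _ hDj (by omega) (D.erase j) rfl s _ _ (a1.mono (Finset.filter_subset _ _))
        (hU.mono (Finset.filter_subset _ _)) e1 (by
          intro w hw
          rw [Finset.mem_filter] at hw
          have hw1 := mem_frame.1 (hUs hw.1)
          rw [mem_frame]
          refine ⟨fun i hi => hw1.1 i (Finset.mem_of_mem_erase hi), fun i hi => ?_⟩
          by_cases hij : i = j
          · rw [hij, hw.2]
          · exact hw1.2 i fun h' => hi (Finset.mem_erase.2 ⟨hij, h'⟩))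
      have g2 := IH _ hDj (by omega) (D.erase j) rfl (Function.update s j (c (s j))) _ _
        (a1.mono (Finset.filter_subset _ _))
        (hU.mono (Finset.filter_subset _ _)) e2 (by
          intro w hw
          rw [Finset.mem_filter] at hw
          have hw1 := mem_frame.1 (hUs hw.1)
          rw [mem_frame]
          refine ⟨fun i hi => ?_, fun i hi => ?_⟩
          · rw [Function.update_of_ne (Finset.ne_of_mem_erase hi)]
            exact hw1.1 i (Finset.mem_of_mem_erase hi)
          by_cases hij : i = j
          · rw [hij, Function.update_self]
            exact (hw1.1 j hj).resolve_left hw.2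
          · rw [Function.update_of_ne hij]
            exact hw1.2 i fun h' => hi (Finset.mem_erase.2 ⟨hij, h'⟩))
      have g3 := gc_halves H g1 g2 (by rw [Finset.filter_union_filter_not_eq]; exact a1)
        (Finset.disjoint_filter_filter_not _ _ _)
      rwa [Finset.filter_union_filter_not_eq, Finset.filter_union_filter_not_eq] at g3
    · push Not at hgood
      have big : ∀ j ∈ D, ∃ u, u ∉ G j ∧ 10 ≤ (V1.filter fun w => w j = u).card := by
        intro j hj
        by_contra hno
        push Not at hno
        obtain ⟨p, hp, hpj⟩ := hgood j hj
        obtain ⟨P2, hP2, hlt⟩ := reduce H a1 hU a2 G hG hUG (i := j)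
          ⟨s j, (memG _ _).2 (Or.inl rfl)⟩ hp hpj (by
            intro u hu B hB hE hBu _ _
            refine small_gc H (D.erase j) (by rw [Finset.card_erase_of_mem hj]; omega) _
              (Nat.le_of_lt_succ (hno u hu)) _ _ (a1.mono (Finset.filter_subset _ _)) hB rfl ?_ hE
            intro i hi
            by_cases hij : i = j
            · exact ⟨u, by rw [hij]; exact hBu⟩
            · refine ⟨s i, const_of_eqv H hE.symm fun q hq => ?_⟩
              exact hV1o i (fun h' => hi (Finset.mem_erase.2 ⟨hij, h'⟩)) q (Finset.mem_filter.1 hq).1)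
        have := hmin P2 (hV1.trans hP2)
        omega
      set V' := frame c D s \ U with hV'
      have hdV : ∀ v ∈ V1, ∀ w ∈ V', Dich c v w := by
        intro v hv w hw
        apply dich_of_disj H
        intro x hx hxw
        obtain ⟨u, hu, hxu⟩ := (a2 x).1 ⟨v, hv, hx⟩
        rw [hV', Finset.mem_sdiff] at hw
        have := (isCode_frame H D s).eq_of_mem (hUs hu) hw.1 hxu hxw
        exact hw.2 (this ▸ hu)
      have hdisj : Disjoint V1 V' := by
        rw [Finset.disjoint_left]
        intro v hv hv'
        exact not_dich_self H v (hdV v hv v hv')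
      have hT : IsCode c (V1 ∪ V') := by
        intro v hv w hw hne
        rw [Finset.mem_union] at hv hw
        rcases hv with hv | hv <;> rcases hw with hw | hw
        · exact a1 v hv w hw hne
        · exact hdV v hv w hw
        · exact (hdV w hw v hv).symm H
        · exact isCode_frame H D s v (Finset.mem_sdiff.1 hv).1 w (Finset.mem_sdiff.1 hw).1 hne
      have hTcard : (V1 ∪ V').card = 2 ^ D.card := by
        rw [Finset.card_union_of_disjoint hdisj, hV', Finset.card_sdiff_of_subset hUs,
          card_frame H, a3]
        omega
      have hTo : ∀ i, i ∉ D → ∃ o, ∀ p ∈ V1 ∪ V', p i = o := by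
        intro i hi
        refine ⟨s i, fun p hp => ?_⟩
        rcases Finset.mem_union.1 hp with hp | hp
        · exact hV1o i hi p hp
        · exact (mem_frame.1 (Finset.mem_sdiff.1 hp).1).2 i hi
      have hv'T : v' ∈ V1 ∪ V' := Finset.mem_union_right _ (Finset.mem_sdiff.2 ⟨hv's, hv'U⟩)
      have hcount : ∀ j ∈ D,
          ((V1 ∪ V').filter fun w => w j = c (v' j)).card + 10 ≤ 2 ^ (D.card - 1) := by
        intro j hj
        obtain ⟨u, hu, hu10⟩ := big j hj
        have hv'G := hfG v' hv's j
        have hne1 : u ≠ v' j := fun h' => hu (h' ▸ hv'G)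
        have hne2 : u ≠ c (v' j) := fun h' => hu (h' ▸ hG j _ hv'G)
        have hd' : Disjoint ((V1 ∪ V').filter fun w => w j = c (v' j))
            (V1.filter fun w => w j = u) := by
          rw [Finset.disjoint_left]
          intro z hz hz'
          rw [Finset.mem_filter] at hz hz'
          exact hne2 (hz'.2.symm.trans hz.2)
        have hp := (pack H (D.erase j) (((V1 ∪ V').filter fun w => w j = c (v' j)) ∪
          (V1.filter fun w => w j = u)) (by
            intro p hp q hq hpq
            have hlet : ∀ p ∈ ((V1 ∪ V').filter fun w => w j = c (v' j)) ∪
              (V1.filter fun w => w j = u), p ∈ V1 ∪ V' ∧ (p j = c (v' j) ∨ p j = u) := by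
              intro p hp
              rcases Finset.mem_union.1 hp with hp | hp
              · rw [Finset.mem_filter] at hp
                exact ⟨hp.1, Or.inl hp.2⟩
              · rw [Finset.mem_filter] at hp
                exact ⟨Finset.mem_union_left _ hp.1, Or.inr hp.2⟩
            obtain ⟨hp1, hp2⟩ := hlet p hp
            obtain ⟨hq1, hq2⟩ := hlet q hq
            obtain ⟨i, hi, hi'⟩ := dich_in H hT hTo hp1 hq1 hpq
            refine ⟨i, Finset.mem_erase.2 ⟨?_, hi⟩, hi'⟩
            rintro rfl
            rcases hp2 with hp2 | hp2 <;> rcases hq2 with hq2 | hq2 <;> rw [hp2, hq2] at hi'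
            · exact H.ne _ hi'.symm
            · exact hne1 (H.inj hi').symm
            · rw [H.inv] at hi'; exact hne1 hi'
            · exact H.ne _ hi'.symm)).1
        rw [Finset.card_union_of_disjoint hd', Finset.card_erase_of_mem hj] at hp
        omega
      rcases Nat.eq_zero_or_pos D.card with h0 | h0
      · rw [h0] at hUcard
        have hU0 : U.card = 0 := by omega
        rw [hU0] at a3
        rw [Finset.card_eq_zero] at a3 hU0
        rw [a3, hU0]
        exact Relation.ReflTransGen.refl
      · exfalso
        obtain ⟨j0, hj0⟩ := Finset.card_pos.1 h0
        have h5 : D.card = 5 := by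
          by_contra h5
          have h6 := hcount j0 hj0
          have h7 : 2 ^ (D.card - 1) ≤ 2 ^ 3 := Nat.pow_le_pow_right (by norm_num) (by omega)
          omega
        have hpc := pair_count H hT hTo hv'T
        have hs := Finset.sum_le_sum (s := D) (g := fun _ => 6)
          (f := fun i => ((V1 ∪ V').filter fun w => w i = c (v' i)).card) (fun i hi => by
            have := hcount i hi
            rw [h5] at this
            omega)
        simp only [Finset.sum_const, smul_eq_mul] at hs
        rw [hTcard, h5] at hpc
        rw [h5] at hs
        omega
  intro s V U hV hU hVU hUs
  by_cases hfull : ∃ v', v' ∈ frame c D s ∧ v' ∉ U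
  · exact proper s V U hV hU hVU hUs hfull
  · push Not at hfull
    have hUe : U = frame c D s := Finset.Subset.antisymm hUs fun v hv => hfull v hv
    subst hUe
    have hVc : V.card = 2 ^ D.card := by rw [card_eq_of_eqv H hV hU hVU, card_frame H]
    have hne : V.Nonempty := by
      rw [← Finset.card_pos, hVc]; positivity
    obtain ⟨v, hv⟩ := hne
    have hVo : ∀ a ∈ V, ∀ i, i ∉ D → a i = s i := fun a ha i hi =>
      const_of_eqv H hVU (fun q hq => (mem_frame.1 hq).2 i hi) a ha
    have hF := isCode_frame H D v
    have he : Eqv c V (frame c D v) := by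
      refine tile_eqv H hV hF (E := D) s hVc (card_frame H D v) hVo ?_
      intro a ha i hi
      rw [(mem_frame.1 ha).2 i hi, hVo v hv i hi]
    have g := proper v (V \ {v}) (frame c D v \ {v}) (hV.mono Finset.sdiff_subset)
      (hF.mono Finset.sdiff_subset)
      (eqv_erase hV hF he (by simpa using hv) (by simpa using self_mem_frame))
      Finset.sdiff_subset ⟨v, self_mem_frame, by simp⟩
    exact (gc_of_common H hV hv self_mem_frame g).trans
      (frame_gc H D fun i hi => hVo v hv i hi)

theorem completable_by_simple_code_strongly_equivalent
    {S : Type} [Fintype S] [DecidableEq S] (c : S → S)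
    (hc : ∀ s, c (c s) = s) (hc' : ∀ s, c s ≠ s)
    (V W V' : Finset (Fin 5 → S)) (hV : IsCode c V) (hW : IsCode c W)
    (heq : Equivalent c V W)
    (hV' : IsCode c V') (hsimple : SimpleCode c V')
    (hdisj : Disjoint V V') (htile : CubeTiling c (V ∪ V')) :
    GC c V W := by
  have H : Compl c := ⟨hc, hc'⟩
  choose s hs using hsimple
  have hsub : V' ⊆ frame c Finset.univ s := by
    intro v hv
    rw [mem_frame]
    exact ⟨fun i _ => hs i v hv, fun i hi => absurd (Finset.mem_univ i) hi⟩
  have hF := isCode_frame H Finset.univ s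
  have hD : (Finset.univ : Finset (Fin 5)).card = 5 := by simp
  have he : Eqv c (V ∪ V') (frame c Finset.univ s) :=
    tile_eqv H htile.1 hF (E := Finset.univ) s (by rw [hD]; exact htile.2) (card_frame H _ s)
      (fun _ _ i hi => absurd (Finset.mem_univ i) hi) (fun _ _ i hi => absurd (Finset.mem_univ i) hi)
  have he2 := eqv_erase htile.1 hF he Finset.subset_union_right hsub
  rw [Finset.union_sdiff_right, Finset.sdiff_eq_self_of_disjoint hdisj] at he2
  have hVW := eqv_of_equivalent H heq
  have hU := hF.mono (Finset.sdiff_subset (t := V'))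
  have g1 := frame_part_gc H 5 le_rfl Finset.univ hD s V _ hV hU he2 Finset.sdiff_subset
  have g2 := frame_part_gc H 5 le_rfl Finset.univ hD s W _ hW hU (hVW.symm.trans he2)
    Finset.sdiff_subset
  exact g1.trans (g2.symm H hW)

end PolyboxPaper
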